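/- arXiv:1305.1273 — 6 statements merged into one kernel-verified Lean document; each statement's English description precedes it below -/
import Mathlib

section
/- Let $n \ge 1$, let $t_0 \in \mathbb{R}$, let $F : \mathbb{R} \to M_n(\mathbb{C})$ be smooth with $F(t)$ having real entries and being symmetric for every $t$, and let $H_0 \in M_n(\mathbb{C})$ be symmetric with positive definite imaginary part. Then the matrix Riccati initial value problem $H'(t) + H(t)^2 = F(t)$, $H(t_0) = H_0$, has a unique smooth solution $H : \mathbb{R} \to M_n(\mathbb{C})$ defined on all of $\mathbb{R}$, and for every $t \in \mathbb{R}$ the matrix $H(t)$ is symmetric and its imaginary part $\mathrm{Im}\,H(t)$ is positive definite. -/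
/-!
The Riccati equation `H' + H² = F` is linearised by `H = Z Y⁻¹`, where `Y' = Z`, `Z' = F Y`,
`Y(t₀) = 1`, `Z(t₀) = H₀`. The linear system has a global solution, given by its Peano–Baker series
(`exists_linear_ode_solution`), so the only possible obstruction is that `Y(t)` becomes singular.

Since `F` is real symmetric, the Wronskians `Yᴴ Z - Zᴴ Y` and `Yᵀ Z - Zᵀ Y` are constant, equal to
`H₀ - H₀ᴴ = 2i Im H₀` and `H₀ - H₀ᵀ = 0`. If `Y(t) v = 0`, the first identity gives
`vᴴ (Im H₀) v = 0`, hence `v = 0`: thus `Y(t)` is invertible for all `t`. The second identity says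
that `H = Z Y⁻¹` is symmetric, and then the first becomes `Im H = (Y⁻¹)ᴴ (Im H₀) Y⁻¹`, which is
positive definite (`riccati_exists`). Uniqueness (`riccati_unique`) holds because `X ↦ F(t) - X²` is
Lipschitz on bounded sets, and smoothness (`riccati_contDiff`) follows by bootstrapping the equation.
-/

section

open Matrix
open scoped ComplexOrder

attribute [local instance] Matrix.linftyOpNormedRing Matrix.linftyOpNormedAlgebra
  Matrix.linftyOpNormedAddCommGroup Matrix.linftyOpNormedSpace

/-! ### Linear equations in a Banach algebra -/

/-- The terms of the Peano–Baker series for `W' = A W`, `W(t₀) = w₀`: the constant `w₀`, and then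
iterated integrals `w_{k+1}(t) = ∫_{t₀}^t A(s) w_k(s) ds`. -/
noncomputable def peanoBakerTerm {R : Type*} [NormedRing R] [NormedAlgebra ℝ R] (A : ℝ → R)
    (t₀ : ℝ) (w₀ : R) : ℕ → ℝ → R
  | 0 => fun _ => w₀
  | k + 1 => fun t => ∫ s in t₀..t, A s * peanoBakerTerm A t₀ w₀ k s

variable {R : Type*} [NormedRing R] [NormedAlgebra ℝ R]

theorem peanoBakerTerm_continuous {A : ℝ → R} (hA : Continuous A) (t₀ : ℝ) (w₀ : R) (k : ℕ) :
    Continuous (peanoBakerTerm A t₀ w₀ k) := by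
  induction k with
  | zero => exact continuous_const
  | succ k ih =>
    exact intervalIntegral.continuous_primitive (fun a b => (hA.mul ih).intervalIntegrable a b) t₀

theorem peanoBakerTerm_hasDerivAt [CompleteSpace R] {A : ℝ → R} (hA : Continuous A) (t₀ : ℝ)
    (w₀ : R) (k : ℕ) (t : ℝ) :
    HasDerivAt (peanoBakerTerm A t₀ w₀ (k + 1)) (A t * peanoBakerTerm A t₀ w₀ k t) t := by
  have hc := hA.mul (peanoBakerTerm_continuous hA t₀ w₀ k)
  exact intervalIntegral.integral_hasDerivAt_right (hc.intervalIntegrable _ _)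
    hc.stronglyMeasurable.stronglyMeasurableAtFilter hc.continuousAt

/-- The bound is uniform enough on bounded intervals, on both sides of `t₀`, to make the series and
its termwise derivative converge like an exponential series. -/
theorem peanoBakerTerm_norm_le {A : ℝ → R} (t₀ : ℝ) (w₀ : R) {M T : ℝ}
    (hM : ∀ t ∈ Set.Ioo (t₀ - T) (t₀ + T), ‖A t‖ ≤ M) (k : ℕ) :
    ∀ t ∈ Set.Ioo (t₀ - T) (t₀ + T),
      ‖peanoBakerTerm A t₀ w₀ k t‖ ≤ ‖w₀‖ * ((M * |t - t₀|) ^ k / k.factorial) := by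
  induction k with
  | zero => intro t _; simp [peanoBakerTerm]
  | succ k ih =>
    intro t ht
    have ht₀ : t₀ ∈ Set.Ioo (t₀ - T) (t₀ + T) := by
      constructor <;> linarith [ht.1, ht.2]
    have hM0 : 0 ≤ M := (norm_nonneg _).trans (hM t₀ ht₀)
    have hsub : Set.uIoc t₀ t ⊆ Set.Ioo (t₀ - T) (t₀ + T) :=
      Set.uIoc_subset_uIcc.trans (Set.ordConnected_Ioo.uIcc_subset ht₀ ht)
    calc ‖peanoBakerTerm A t₀ w₀ (k + 1) t‖
        ≤ ∫ s in Set.uIoc t₀ t, ‖w₀‖ * (M ^ (k + 1) / k.factorial) * |s - t₀| ^ k := by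
          rw [peanoBakerTerm, intervalIntegral.norm_intervalIntegral_eq]
          apply MeasureTheory.norm_integral_le_of_norm_le
            (Continuous.integrableOn_uIoc (by fun_prop))
          refine (MeasureTheory.ae_restrict_mem measurableSet_uIoc).mono fun s hs => ?_
          calc _ ≤ ‖A s‖ * ‖peanoBakerTerm A t₀ w₀ k s‖ := norm_mul_le _ _
            _ ≤ M * (‖w₀‖ * ((M * |s - t₀|) ^ k / k.factorial)) := by
              gcongr
              · exact hM s (hsub hs)
              · exact ih s (hsub hs)
            _ = _ := by rw [mul_pow]; ring
      _ = _ := by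
          rw [MeasureTheory.integral_const_mul, integral_pow_abs_sub_uIoc, Nat.factorial_succ,
            mul_pow]
          push_cast
          field_simp

/-- Global solvability of `W' = A W`: the Peano–Baker series may be differentiated term by term on
every bounded interval around `t₀`. -/
theorem exists_linear_ode_solution [CompleteSpace R] {A : ℝ → R} (hA : Continuous A)
    (t₀ : ℝ) (w₀ : R) :
    ∃ W : ℝ → R, W t₀ = w₀ ∧ ∀ t, HasDerivAt W (A t * W t) t := by
  set w := peanoBakerTerm A t₀ w₀ with hw
  have hsucc0 : ∀ k, w (k + 1) t₀ = 0 := fun k => by simp [hw, peanoBakerTerm]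
  refine ⟨fun t => ∑' k, w k t, ?_, fun t => ?_⟩
  · change ∑' k, w k t₀ = w₀
    rw [tsum_eq_single 0]
    · simp [hw, peanoBakerTerm]
    · intro k hk
      obtain ⟨j, rfl⟩ := Nat.exists_eq_succ_of_ne_zero hk
      exact hsucc0 j
  obtain ⟨T, hT⟩ : ∃ T, |t - t₀| < T := exists_gt _
  have hT0 : 0 < T := (abs_nonneg _).trans_lt hT
  have ht : t ∈ Set.Ioo (t₀ - T) (t₀ + T) := by
    rw [abs_lt] at hT; constructor <;> linarith [hT.1, hT.2]
  have ht₀ : t₀ ∈ Set.Ioo (t₀ - T) (t₀ + T) := by constructor <;> linarith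
  obtain ⟨M, hM⟩ := (isCompact_Icc (a := t₀ - T) (b := t₀ + T)).exists_bound_of_continuousOn
    hA.continuousOn
  replace hM : ∀ t ∈ Set.Ioo (t₀ - T) (t₀ + T), ‖A t‖ ≤ M :=
    fun s hs => hM s (Set.Ioo_subset_Icc_self hs)
  have hM0 : 0 ≤ M := (norm_nonneg _).trans (hM t₀ ht₀)
  have hbd : ∀ k, ∀ s ∈ Set.Ioo (t₀ - T) (t₀ + T),
      ‖w k s‖ ≤ ‖w₀‖ * ((M * T) ^ k / k.factorial) := fun k s hs => by
    refine (peanoBakerTerm_norm_le t₀ w₀ hM k s hs).trans ?_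
    have : |s - t₀| ≤ T := by rw [abs_le]; constructor <;> linarith [hs.1, hs.2]
    gcongr
  have hsum : Summable fun k : ℕ => ‖w₀‖ * ((M * T) ^ k / k.factorial) :=
    (Real.summable_pow_div_factorial _).mul_left _
  have hws : ∀ s ∈ Set.Ioo (t₀ - T) (t₀ + T), Summable fun k => w k s := fun s hs =>
    .of_norm_bounded hsum fun k => hbd k s hs
  have hder : HasDerivAt (fun s => ∑' k, w (k + 1) s) (∑' k, A t * w k t) t := by
    refine hasDerivAt_tsum_of_isPreconnected (hsum.mul_left M) isOpen_Ioo isPreconnected_Ioo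
      (fun k s _ => peanoBakerTerm_hasDerivAt hA t₀ w₀ k s) (fun k s hs => ?_) ht₀ ?_ ht
    · exact (norm_mul_le _ _).trans (mul_le_mul (hM s hs) (hbd k s hs) (norm_nonneg _) hM0)
    · have h0 : Summable fun k => w (k + 1) t₀ := by
        rw [funext hsucc0]
        exact summable_zero
      exact h0
  rw [(hws t ht).tsum_mul_left] at hder
  refine (hder.const_add w₀).congr_of_eventuallyEq ?_
  filter_upwards [isOpen_Ioo.mem_nhds ht] with s hs
  exact (hws s hs).tsum_eq_zero_add

variable {n : ℕ}

/-! ### Matrix-valued curves -/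

/-- Translates between derivatives for the local operator norm and entrywise derivatives; it holds
because the topology of that norm is definitionally the product topology. -/
theorem hasDerivAt_matrix_iff {m : Type*} [Fintype m] [DecidableEq m] {W : ℝ → Matrix m m ℂ}
    {W' : Matrix m m ℂ} {t : ℝ} :
    HasDerivAt W W' t ↔ ∀ i j, HasDerivAt (fun s => W s i j) (W' i j) t := by
  refine (hasDerivAt_pi (φ := W) (φ' := W')).trans ?_
  exact forall_congr' fun i => hasDerivAt_pi

theorem hasDerivAt_transpose {W : ℝ → Matrix (Fin n) (Fin n) ℂ} {W' : Matrix (Fin n) (Fin n) ℂ}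
    {t : ℝ} (h : HasDerivAt W W' t) : HasDerivAt (fun s => (W s)ᵀ) W'ᵀ t :=
  hasDerivAt_matrix_iff.2 fun i j => hasDerivAt_matrix_iff.1 h j i

theorem hasDerivAt_conjTranspose {W : ℝ → Matrix (Fin n) (Fin n) ℂ}
    {W' : Matrix (Fin n) (Fin n) ℂ} {t : ℝ} (h : HasDerivAt W W' t) :
    HasDerivAt (fun s => (W s)ᴴ) W'ᴴ t :=
  hasDerivAt_matrix_iff.2 fun i j => (hasDerivAt_matrix_iff.1 h j i).star

/-- The second-order linear equation `Y'' = F Y`, solved as a first-order system for `(Y, Z)`, which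
is encoded as the first block column of a `2 × 2` block matrix. -/
theorem exists_linear_system_solution {F : ℝ → Matrix (Fin n) (Fin n) ℂ}
    (hF : ∀ i j, Continuous fun t => F t i j) (t₀ : ℝ) (H₀ : Matrix (Fin n) (Fin n) ℂ) :
    ∃ Y Z : ℝ → Matrix (Fin n) (Fin n) ℂ, Y t₀ = 1 ∧ Z t₀ = H₀ ∧
      (∀ t, HasDerivAt Y (Z t) t) ∧ ∀ t, HasDerivAt Z (F t * Y t) t := by
  have hA : Continuous fun t =>
      (fromBlocks 0 1 (F t) 0 : Matrix (Fin n ⊕ Fin n) (Fin n ⊕ Fin n) ℂ) :=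
    Continuous.matrix_fromBlocks continuous_const continuous_const
      (continuous_matrix hF) continuous_const
  obtain ⟨W, hW₀, hW⟩ := exists_linear_ode_solution hA t₀ (fromBlocks 1 0 H₀ 0)
  have hmul : ∀ t, fromBlocks 0 1 (F t) 0 * W t =
      fromBlocks (W t).toBlocks₂₁ (W t).toBlocks₂₂
        (F t * (W t).toBlocks₁₁) (F t * (W t).toBlocks₁₂) := fun t => by
    conv_lhs => rw [← fromBlocks_toBlocks (W t), fromBlocks_multiply]
    simp
  refine ⟨fun t => (W t).toBlocks₁₁, fun t => (W t).toBlocks₂₁, by simp [hW₀], by simp [hW₀],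
    fun t => hasDerivAt_matrix_iff.2 fun i j => ?_, fun t => hasDerivAt_matrix_iff.2 fun i j => ?_⟩
  · have := hasDerivAt_matrix_iff.1 (hW t) (Sum.inl i) (Sum.inl j)
    rwa [hmul] at this
  · have := hasDerivAt_matrix_iff.1 (hW t) (Sum.inr i) (Sum.inl j)
    rwa [hmul] at this

theorem eq_of_forall_hasDerivAt_zero {W : ℝ → Matrix (Fin n) (Fin n) ℂ}
    (h : ∀ t, HasDerivAt W 0 t) (s t : ℝ) : W s = W t :=
  is_const_of_deriv_eq_zero (fun t => (h t).differentiableAt) (fun t => (h t).deriv) s t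

/-! ### Real positive definite matrices as complex ones -/

/-- For `v = a + i b` the cross terms of `vᴴ P v` cancel by symmetry of `P`, leaving
`aᵀ P a + bᵀ P b`. -/
theorem PosDef_map_ofReal {P : Matrix (Fin n) (Fin n) ℝ} (hP : P.PosDef) :
    (P.map Complex.ofReal).PosDef := by
  have hsymm : Pᵀ = P := by 
    rw [← conjTranspose_eq_transpose_of_trivial, hP.isHermitian.eq]
  refine PosDef.of_dotProduct_mulVec_pos ?_ fun v hv => ?_
  · ext i j
    simpa using congrArg (fun M : Matrix _ _ _ => M i j) hsymm
  set a : Fin n → ℝ := fun i => (v i).re with ha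
  set b : Fin n → ℝ := fun i => (v i).im with hb
  have key : star v ⬝ᵥ (P.map Complex.ofReal *ᵥ v) = ((a ⬝ᵥ P *ᵥ a + b ⬝ᵥ P *ᵥ b : ℝ) : ℂ) := by
    have hcross : b ⬝ᵥ P *ᵥ a = a ⬝ᵥ P *ᵥ b := by
      rw [dotProduct_mulVec, ← mulVec_transpose, hsymm, dotProduct_comm]
    apply Complex.ext
    · simp [dotProduct, mulVec, ha, hb, ← Finset.sum_add_distrib]
    · have : a ⬝ᵥ P *ᵥ b - b ⬝ᵥ P *ᵥ a = 0 := by rw [hcross, sub_self]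
      simp only [dotProduct, mulVec, ha, hb, ← Finset.sum_sub_distrib] at this
      simp [dotProduct, mulVec]
      rw [← this]
      exact Finset.sum_congr rfl fun i _ => by ring
  rw [key, Complex.zero_lt_real]
  have hnonneg : ∀ x : Fin n → ℝ, 0 ≤ x ⬝ᵥ P *ᵥ x := fun x => by
    simpa using hP.posSemidef.dotProduct_mulVec_nonneg x
  have hpos : ∀ x : Fin n → ℝ, x ≠ 0 → 0 < x ⬝ᵥ P *ᵥ x := fun x hx => by
    simpa using hP.dotProduct_mulVec_pos hx
  by_cases h : a = 0
  · have : b ≠ 0 := fun h' => hv <| funext fun i =>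
      Complex.ext (congrFun h i) (congrFun h' i)
    exact add_pos_of_nonneg_of_pos (hnonneg a) (hpos b this)
  · exact add_pos_of_pos_of_nonneg (hpos a h) (hnonneg b)

theorem PosDef_of_map_ofReal {P : Matrix (Fin n) (Fin n) ℝ}
    (hP : (P.map Complex.ofReal).PosDef) : P.PosDef := by
  refine PosDef.of_dotProduct_mulVec_pos ?_ fun v hv => ?_
  · ext i j
    simpa using hP.isHermitian.apply i j
  · have := hP.dotProduct_mulVec_pos (x := fun i => (v i : ℂ))
      fun h => hv <| funext fun i => by simpa using congrFun h i
    have key : star (fun i => (v i : ℂ)) ⬝ᵥ (P.map Complex.ofReal *ᵥ fun i => (v i : ℂ)) =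
        ((star v ⬝ᵥ P *ᵥ v : ℝ) : ℂ) := by
      simp [dotProduct, mulVec]
    rwa [key, Complex.zero_lt_real] at this

theorem sub_conjTranspose_of_isSymm {H : Matrix (Fin n) (Fin n) ℂ} (hH : H.IsSymm) :
    H - Hᴴ = (2 * Complex.I) • (of fun i j => (H i j).im).map Complex.ofReal := by
  ext i j
  have := hH.apply i j
  simp only [Matrix.sub_apply, conjTranspose_apply, this, Matrix.smul_apply, map_apply, of_apply]
  apply Complex.ext <;> simp
  ring

/-! ### The Riccati equation -/

theorem riccati_unique {F H K : ℝ → Matrix (Fin n) (Fin n) ℂ} {t₀ : ℝ}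
    (hH : ∀ t i j, HasDerivAt (fun s => H s i j) ((F t - H t ^ 2) i j) t)
    (hK : ∀ t i j, HasDerivAt (fun s => K s i j) ((F t - K t ^ 2) i j) t)
    (h₀ : H t₀ = K t₀) : H = K := by
  replace hH : ∀ t, HasDerivAt H (F t - H t ^ 2) t := fun t => hasDerivAt_matrix_iff.2 (hH t)
  replace hK : ∀ t, HasDerivAt K (F t - K t ^ 2) t := fun t => hasDerivAt_matrix_iff.2 (hK t)
  have hHc : Continuous H := continuous_iff_continuousAt.2 fun t => (hH t).continuousAt
  have hKc : Continuous K := continuous_iff_continuousAt.2 fun t => (hK t).continuousAt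
  funext t
  obtain ⟨T, hT⟩ : ∃ T, |t - t₀| < T := exists_gt _
  have hT0 : 0 < T := (abs_nonneg _).trans_lt hT
  have ht : t ∈ Set.Ioo (t₀ - T) (t₀ + T) := by
    rw [abs_lt] at hT; constructor <;> linarith [hT.1, hT.2]
  have ht₀ : t₀ ∈ Set.Ioo (t₀ - T) (t₀ + T) := by constructor <;> linarith
  obtain ⟨R₁, hR₁⟩ := (isCompact_Icc (a := t₀ - T) (b := t₀ + T)).exists_bound_of_continuousOn
    hHc.continuousOn
  obtain ⟨R₂, hR₂⟩ := (isCompact_Icc (a := t₀ - T) (b := t₀ + T)).exists_bound_of_continuousOn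
    hKc.continuousOn
  set R := max (max R₁ R₂) 0
  have hR : (0 : ℝ) ≤ 2 * R := by positivity
  refine ODE_solution_unique_of_mem_Ioo (v := fun t X => F t - X ^ 2)
    (s := fun _ => {X | ‖X‖ ≤ R}) (K := ⟨2 * R, hR⟩) (fun s _ => ?_) ht₀
    (fun s hs => ⟨hH s, (hR₁ s (Set.Ioo_subset_Icc_self hs)).trans ?_⟩)
    (fun s hs => ⟨hK s, (hR₂ s (Set.Ioo_subset_Icc_self hs)).trans ?_⟩) h₀ ht
  · refine LipschitzOnWith.of_dist_le_mul fun X hX X' hX' => ?_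
    rw [dist_eq_norm, dist_eq_norm]
    calc ‖F s - X ^ 2 - (F s - X' ^ 2)‖ = ‖X' * (X' - X) + (X' - X) * X‖ := by
          congr 1; noncomm_ring
      _ ≤ ‖X'‖ * ‖X' - X‖ + ‖X' - X‖ * ‖X‖ :=
          (norm_add_le _ _).trans (add_le_add (norm_mul_le _ _) (norm_mul_le _ _))
      _ ≤ R * ‖X' - X‖ + ‖X' - X‖ * R := by gcongr <;> assumption
      _ = 2 * R * ‖X - X'‖ := by rw [norm_sub_rev X' X]; ring
  · exact (le_max_left _ _).trans (le_max_left _ _)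
  · exact (le_max_right _ _).trans (le_max_left _ _)

/-- Bootstrapping: if `H` is `C^k`, then so is `H' = F - H²`, hence `H` is `C^(k+1)`. -/
theorem riccati_contDiff {F H : ℝ → Matrix (Fin n) (Fin n) ℂ}
    (hF : ∀ i j, ContDiff ℝ (⊤ : ℕ∞) fun t => F t i j)
    (hH : ∀ t, ∀ i j, HasDerivAt (fun s => H s i j) ((F t - H t ^ 2) i j) t) (i j : Fin n) :
    ContDiff ℝ (⊤ : ℕ∞) fun t => H t i j := by
  rw [contDiff_infty]
  intro k
  induction k generalizing i j with
  | zero =>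
    exact contDiff_zero.2 (continuous_iff_continuousAt.2 fun t => (hH t i j).continuousAt)
  | succ k ih =>
    push_cast
    refine contDiff_succ_iff_deriv.2
      ⟨fun t => (hH t i j).differentiableAt, fun h => by simp at h, ?_⟩
    rw [funext fun t => (hH t i j).deriv]
    simp only [Matrix.sub_apply, pow_two, mul_apply]
    exact ((contDiff_infty.1 (hF i j)) k).sub
      (ContDiff.sum fun l _ => (ih i l).mul (ih l j))

/-- The substitution `H = Z Y⁻¹` turns the linear system into the Riccati equation. -/
theorem hasDerivAt_mul_inv {F Y Z : ℝ → Matrix (Fin n) (Fin n) ℂ} {t : ℝ}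
    (hY : HasDerivAt Y (Z t) t) (hZ : HasDerivAt Z (F t * Y t) t) (hu : IsUnit (Y t)) :
    HasDerivAt (fun s => Z s * (Y s)⁻¹) (F t - (Z t * (Y t)⁻¹) ^ 2) t := by
  obtain ⟨u, hu'⟩ := hu
  have hinv : HasDerivAt (fun s => (Y s)⁻¹) (-((Y t)⁻¹ * Z t * (Y t)⁻¹)) t := by
    have h1 := hasFDerivAt_ringInverse (𝕜 := ℝ) u
    rw [hu'] at h1
    have h2 := h1.comp_hasDerivAt t hY
    simp only [nonsing_inv_eq_ringInverse]
    refine h2.congr_deriv ?_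
    rw [← hu']
    simp
  refine (hZ.mul hinv).congr_deriv ?_
  have : Y t * (Y t)⁻¹ = 1 := mul_nonsing_inv _ ((isUnit_iff_isUnit_det _).1 ⟨u, hu'⟩)
  rw [mul_assoc, this]
  noncomm_ring
/-- Existence, with preservation of symmetry and of positivity of the imaginary part, through the
two conserved Wronskians of the linear system. -/
theorem riccati_exists {F : ℝ → Matrix (Fin n) (Fin n) ℂ}
    (hFcont : ∀ i j, Continuous fun t => F t i j)
    (hFreal : ∀ t i j, (F t i j).im = 0) (hFsymm : ∀ t, (F t).IsSymm) (t₀ : ℝ)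
    {H₀ : Matrix (Fin n) (Fin n) ℂ} (hH₀symm : H₀.IsSymm)
    (hH₀pos : (of fun i j => (H₀ i j).im).PosDef) :
    ∃ H : ℝ → Matrix (Fin n) (Fin n) ℂ,
      (∀ t i j, HasDerivAt (fun s => H s i j) ((F t - H t ^ 2) i j) t) ∧ H t₀ = H₀ ∧
      ∀ t, (H t).IsSymm ∧ (of fun i j => (H t i j).im).PosDef := by
  have hconj : ∀ t, (F t)ᴴ = F t := fun t => by
    ext i j
    rw [conjTranspose_apply, (hFsymm t).apply i j]
    exact Complex.conj_eq_iff_im.2 (hFreal t i j)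
  obtain ⟨Y, Z, hY₀, hZ₀, hY, hZ⟩ :=
    exists_linear_system_solution hFcont t₀ H₀
  set P : Matrix (Fin n) (Fin n) ℂ := (of fun i j => (H₀ i j).im).map Complex.ofReal with hP
  have hPpos : P.PosDef := PosDef_map_ofReal hH₀pos
  have hherm : ∀ t, (Y t)ᴴ * Z t - (Z t)ᴴ * Y t = (2 * Complex.I) • P := fun t => by
    have hd : ∀ s, HasDerivAt (fun s => (Y s)ᴴ * Z s - (Z s)ᴴ * Y s) 0 s := fun s => by
      refine (((hasDerivAt_conjTranspose (hY s)).mul (hZ s)).sub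
        ((hasDerivAt_conjTranspose (hZ s)).mul (hY s))).congr_deriv ?_
      rw [conjTranspose_mul, hconj]
      noncomm_ring
    rw [eq_of_forall_hasDerivAt_zero hd t t₀, hY₀, hZ₀, conjTranspose_one, one_mul, mul_one,
      sub_conjTranspose_of_isSymm hH₀symm]
  have hsymm : ∀ t, (Y t)ᵀ * Z t = (Z t)ᵀ * Y t := fun t => by
    have hd : ∀ s, HasDerivAt (fun s => (Y s)ᵀ * Z s - (Z s)ᵀ * Y s) 0 s := fun s => by
      refine (((hasDerivAt_transpose (hY s)).mul (hZ s)).sub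
        ((hasDerivAt_transpose (hZ s)).mul (hY s))).congr_deriv ?_
      rw [transpose_mul, (hFsymm s).eq]
      noncomm_ring
    rw [← sub_eq_zero, eq_of_forall_hasDerivAt_zero hd t t₀, hY₀, hZ₀, transpose_one, one_mul,
      mul_one, hH₀symm.eq, sub_self]
  -- A kernel vector of `Y t` is isotropic for the conserved positive definite form.
  have hunit : ∀ t, IsUnit (Y t) := fun t => by
    rw [← mulVec_injective_iff_isUnit, ← coe_mulVecLin, injective_iff_map_eq_zero]
    intro v hv
    rw [mulVecLin_apply] at hv
    by_contra hne
    have h1 := congrArg (fun M => star v ⬝ᵥ (M *ᵥ v)) (hherm t)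
    have h2 : star v ᵥ* (Y t)ᴴ = 0 := by rw [← star_mulVec, hv, star_zero]
    simp only [sub_mulVec, ← mulVec_mulVec, hv, mulVec_zero, sub_zero, smul_mulVec,
      dotProduct_smul] at h1
    rw [dotProduct_mulVec, h2, zero_dotProduct, eq_comm, smul_eq_mul, mul_eq_zero] at h1
    exact h1.elim (by simp) (hPpos.dotProduct_mulVec_pos hne).ne'
  have hdet : ∀ t, IsUnit (Y t).det := fun t => (isUnit_iff_isUnit_det _).1 (hunit t)
  have hric : ∀ t, HasDerivAt (fun s => Z s * (Y s)⁻¹) (F t - (Z t * (Y t)⁻¹) ^ 2) t :=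
    fun t => hasDerivAt_mul_inv (hY t) (hZ t) (hunit t)
  have hHsymm : ∀ t, (Z t * (Y t)⁻¹).IsSymm := fun t => by
    rw [IsSymm, transpose_mul, transpose_nonsing_inv]
    have hT : IsUnit (Y t)ᵀ.det := by rw [det_transpose]; exact hdet t
    calc (Y t)ᵀ⁻¹ * (Z t)ᵀ = (Y t)ᵀ⁻¹ * ((Z t)ᵀ * Y t) * (Y t)⁻¹ := by
          rw [← mul_assoc, mul_nonsing_inv_cancel_right _ _ (hdet t)]
      _ = Z t * (Y t)⁻¹ := by rw [← hsymm, nonsing_inv_mul_cancel_left _ _ hT]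
  refine ⟨fun t => Z t * (Y t)⁻¹, fun t => hasDerivAt_matrix_iff.1 (hric t), ?_,
    fun t => ⟨hHsymm t, PosDef_of_map_ofReal ?_⟩⟩
  · simp [hY₀, hZ₀]
  · have h2I : (2 * Complex.I : ℂ) ≠ 0 := by simp
    -- `Im H` is congruent to `Im H₀` via `Y⁻¹`.
    have hcongr : (of fun i j => ((Z t * (Y t)⁻¹) i j).im).map Complex.ofReal =
        ((Y t)⁻¹)ᴴ * P * (Y t)⁻¹ := by
      apply smul_right_injective _ h2I
      change (2 * Complex.I) • _ = (2 * Complex.I) • _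
      rw [← sub_conjTranspose_of_isSymm (hHsymm t), ← smul_mul_assoc, ← mul_smul_comm, ← hherm t,
        conjTranspose_mul]
      have hc : ((Y t)⁻¹)ᴴ * (Y t)ᴴ = 1 := by
        rw [← conjTranspose_mul, mul_nonsing_inv _ (hdet t), conjTranspose_one]
      calc _ = (((Y t)⁻¹)ᴴ * (Y t)ᴴ) * Z t * (Y t)⁻¹ -
            ((Y t)⁻¹)ᴴ * (Z t)ᴴ * (Y t * (Y t)⁻¹) := by
            rw [hc, mul_nonsing_inv _ (hdet t), one_mul, mul_one]
        _ = _ := by noncomm_ring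
    rw [hcongr]
    refine hPpos.conjTranspose_mul_mul_same ?_
    rw [mulVec_injective_iff_isUnit, isUnit_nonsing_inv_iff]
    exact hunit t

end

/-- Global existence and uniqueness for the matrix Riccati equation
`H' + H² = F`, `H(t₀) = H₀`, where `F(t)` is real symmetric for all `t` and `H₀` is
complex symmetric with positive definite imaginary part; moreover the solution `H(t)`
stays symmetric with positive definite imaginary part for all `t`. -/
theorem stmt_1 (n : ℕ) (hn : 1 ≤ n) (t₀ : ℝ)
    (F : ℝ → Matrix (Fin n) (Fin n) ℂ)
    (hFsmooth : ∀ i j, ContDiff ℝ (⊤ : ℕ∞) fun t => F t i j)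
    (hFreal : ∀ t i j, (F t i j).im = 0)
    (hFsymm : ∀ t, (F t).IsSymm)
    (H₀ : Matrix (Fin n) (Fin n) ℂ) (hH₀symm : H₀.IsSymm)
    (hH₀pos : (Matrix.of fun i j => (H₀ i j).im).PosDef) :
    ∃ H : ℝ → Matrix (Fin n) (Fin n) ℂ,
      ((∀ i j, ContDiff ℝ (⊤ : ℕ∞) fun t => H t i j) ∧
        (∀ (t : ℝ) (i j : Fin n),
          HasDerivAt (fun s => H s i j) ((F t - H t ^ 2) i j) t) ∧
        H t₀ = H₀) ∧
      (∀ t : ℝ, (H t).IsSymm ∧ (Matrix.of fun i j => (H t i j).im).PosDef) ∧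
      (∀ H' : ℝ → Matrix (Fin n) (Fin n) ℂ,
        (∀ i j, ContDiff ℝ (⊤ : ℕ∞) fun t => H' t i j) →
        (∀ (t : ℝ) (i j : Fin n),
          HasDerivAt (fun s => H' s i j) ((F t - H' t ^ 2) i j) t) →
        H' t₀ = H₀ → H' = H) := by
  obtain ⟨H, hH, hH0, hpos⟩ := riccati_exists (fun i j => (hFsmooth i j).continuous) hFreal hFsymm
    t₀ hH₀symm hH₀pos
  exact ⟨H, ⟨riccati_contDiff hFsmooth hH, hH, hH0⟩, hpos,
    fun K _ hK hK0 => riccati_unique hK hH (hK0.trans hH0.symm)⟩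
end

section
/- Let $n \ge 1$, let $H : \mathbb{R} \to M_n(\mathbb{C})$ be differentiable with $H(t)$ symmetric for all $t$, let $F : \mathbb{R} \to M_n(\mathbb{C})$ take values that have real entries and are symmetric, and assume $H'(t) + H(t)^2 = F(t)$ for all $t$ and that $\mathrm{Im}\,H(t)$ is invertible for all $t$. Then for all $t, t_0 \in \mathbb{R}$ one has $\det \mathrm{Im}\,H(t) = \det \mathrm{Im}\,H(t_0) \cdot \exp\big(-2 \int_{t_0}^{t} \mathrm{tr}\,\mathrm{Re}\,H(s)\,ds\big)$. -/
/-!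
Write `H = X + iY` with `X`, `Y` real. Since `F` is real, the imaginary part of the Riccati equation
is the linear equation `Y' = -(XY + YX)`. Jacobi's formula (`hasDerivAt_det_real`) and
cyclicity of the trace then give the scalar equation
`(det Y)' = tr (adj Y · Y') = -2 (tr X) det Y`, which `eq_mul_exp_of_hasDerivAt` solves with the
integrating factor `exp (2 ∫ tr X)`. The integral makes sense because `X`, being
differentiable, is continuous.
-/

/-- Jacobi's formula for a curve of real matrices, in terms of the adjugate so that no
invertibility is needed. -/
theorem hasDerivAt_det_real {n : ℕ} (A : ℝ → Matrix (Fin n) (Fin n) ℝ)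
    (A' : Matrix (Fin n) (Fin n) ℝ) (t : ℝ)
    (h : ∀ i j, HasDerivAt (fun s => A s i j) (A' i j) t) :
    HasDerivAt (fun s => (A s).det) (Matrix.trace ((A t).adjugate * A')) t := by
  -- By Cramer's rule the trace is the sum over columns `i` of `det (A t)` with column `i`
  -- replaced by that of `A'`.
  have key : Matrix.trace ((A t).adjugate * A') =
      ∑ i, ((A t).updateCol i (fun k => A' k i)).det := by
    refine Finset.sum_congr rfl fun i _ => ?_
    rw [← Matrix.cramer_apply, Matrix.cramer_eq_adjugate_mulVec]
    rfl
  rw [key]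
  simp only [Matrix.det_apply]
  rw [Finset.sum_comm (s := (Finset.univ : Finset (Fin n)))]
  refine HasDerivAt.fun_sum fun σ _ => ?_
  rw [← Finset.smul_sum]
  refine HasDerivAt.fun_const_smul _ ?_
  have hp := HasDerivAt.fun_finsetProd (u := Finset.univ) fun i _ => h (σ i) i
  refine hp.congr_deriv ?_
  symm
  refine Finset.sum_congr rfl fun i _ => ?_
  rw [← Finset.prod_erase_mul _ _ (Finset.mem_univ i), smul_eq_mul]
  congr 1
  · refine Finset.prod_congr rfl fun j hj => ?_
    rw [Matrix.updateCol_ne (Finset.ne_of_mem_erase hj)]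
  · simp

theorem eq_mul_exp_of_hasDerivAt (d x : ℝ → ℝ) (hx : Continuous x)
    (hd : ∀ t, HasDerivAt d (-2 * x t * d t) t) (t t₀ : ℝ) :
    d t = d t₀ * Real.exp (-2 * ∫ s in t₀..t, x s) := by
  have hI : ∀ u, HasDerivAt (fun u => ∫ s in t₀..u, x s) (x u) u := fun u =>
    intervalIntegral.integral_hasDerivAt_right (hx.intervalIntegrable _ _)
      (hx.stronglyMeasurableAtFilter _ _) hx.continuousAt
  have hg : ∀ u, HasDerivAt (fun u => d u * Real.exp (2 * ∫ s in t₀..u, x s)) 0 u := by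
    intro u
    refine ((hd u).fun_mul ((hI u).const_mul 2).exp).congr_deriv ?_
    ring
  have hc := is_const_of_deriv_eq_zero (fun u => (hg u).differentiableAt)
    (fun u => (hg u).deriv) t t₀
  simp only [intervalIntegral.integral_same, mul_zero, Real.exp_zero, mul_one] at hc
  rw [← hc, mul_assoc, ← Real.exp_add]
  simp

/-- Determinant identity for solutions of the matrix Riccati equation `H' + H² = F`
with `F` real symmetric, `H` symmetric and `Im H(t)` invertible:
`det Im H(t) = det Im H(t₀) · exp(-2 ∫_{t₀}^t tr Re H(s) ds)`. -/
theorem stmt_2 (n : ℕ) (hn : 1 ≤ n)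
    (H F : ℝ → Matrix (Fin n) (Fin n) ℂ)
    (hHsymm : ∀ t, (H t).IsSymm)
    (hFreal : ∀ t i j, (F t i j).im = 0)
    (hFsymm : ∀ t, (F t).IsSymm)
    (hODE : ∀ (t : ℝ) (i j : Fin n),
      HasDerivAt (fun s => H s i j) ((F t - H t ^ 2) i j) t)
    (hinv : ∀ t : ℝ, (Matrix.of fun i j => (H t i j).im).det ≠ 0) :
    ∀ t t₀ : ℝ,
      (Matrix.of fun i j => (H t i j).im).det =
        (Matrix.of fun i j => (H t₀ i j).im).det *
          Real.exp (-2 * ∫ s in t₀..t, Matrix.trace (Matrix.of fun i j => (H s i j).re)) := by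
  intro t t₀
  have hre : ∀ t i j, HasDerivAt (fun s => (H s i j).re) ((F t - H t ^ 2) i j).re t :=
    fun t i j => Complex.reCLM.hasFDerivAt.comp_hasDerivAt t (hODE t i j)
  have him : ∀ t i j, HasDerivAt (fun s => (H s i j).im) ((F t - H t ^ 2) i j).im t :=
    fun t i j => Complex.imCLM.hasFDerivAt.comp_hasDerivAt t (hODE t i j)
  refine eq_mul_exp_of_hasDerivAt
    (fun s => (Matrix.of fun i j => (H s i j).im).det)
    (fun s => Matrix.trace (Matrix.of fun i j => (H s i j).re)) ?_ ?_ t t₀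
  · refine continuous_finsetSum _ fun i _ => ?_
    exact continuous_iff_continuousAt.2 fun s => (hre s i i).continuousAt
  · intro u
    set X : Matrix (Fin n) (Fin n) ℝ := Matrix.of fun i j => (H u i j).re with hX
    set Y : Matrix (Fin n) (Fin n) ℝ := Matrix.of fun i j => (H u i j).im with hY
    have hder := hasDerivAt_det_real (fun s => Matrix.of fun i j => (H s i j).im)
      (-(X * Y + Y * X)) u (fun i j => by
        refine (him u i j).congr_deriv ?_
        simp [hX, hY, pow_two, Matrix.mul_apply, hFreal, Finset.sum_add_distrib])
    refine hder.congr_deriv (Eq.symm ?_)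
    change -2 * X.trace * Y.det = (Y.adjugate * -(X * Y + Y * X)).trace
    have h1 : (Y.adjugate * (X * Y)).trace = Y.det * X.trace := by
      rw [← Matrix.mul_assoc, Matrix.trace_mul_comm, ← Matrix.mul_assoc, Matrix.mul_adjugate]
      simp
    have h2 : (Y.adjugate * (Y * X)).trace = Y.det * X.trace := by
      rw [← Matrix.mul_assoc, Matrix.adjugate_mul]
      simp
    rw [Matrix.mul_neg, Matrix.trace_neg, Matrix.mul_add, Matrix.trace_add, h1, h2]
    ring
end

section
/- Let $m \ge 2$, $L > 0$, $\lambda \in \mathbb{R}$ and $K > 0$. Let $B \subset \mathbb{R}^m$ be the closed ball of radius $L/2$ centered at $(L/2) e_1$, so that the segment $\gamma(t) = t e_1$, $t \in [0,L]$, is a diameter of $B$ (a nontangential geodesic for the Euclidean metric). Then there exist $C > 0$ and a family $(v_\tau)_{\tau \ge 1}$ of smooth functions $\mathbb{R}^m \to \mathbb{C}$ such that, writing $s = \tau + i\lambda$: (i) $\big(\int_B |\Delta v_\tau + s^2 v_\tau|^2\,dx\big)^{1/2} \le C\, \tau^{-K}$ for all $\tau \ge 1$; (ii) $\big(\int_B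 |v_\tau|^2\,dx\big)^{1/2} \le C$ for all $\tau \ge 1$; and (iii) for every continuous function $\psi : B \to \mathbb{C}$, $\lim_{\tau \to \infty} \int_B |v_\tau|^2\, \psi\, dx = \int_0^L e^{-2\lambda t}\, \psi(t e_1)\, dt$. -/
/-!
For the Euclidean metric the Gaussian beam can be replaced by a beam with a compactly supported
transverse profile of width `τ^{-1/4}`, much wider than the diffraction scale `τ^{-1/2}`.
Write `x = (x₀, x') ∈ ℝ × ℝⁿ`, `R = τ^{1/4}`, and fix a bump function `χ` on `ℝⁿ` with
`∫ |χ|² = 1`. The quasimode is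
`v(x) = R^{n/2} ∑_{k ≤ N} R^{2k} g_k(x₀) ((Δ')ᵏ χ)(R x')`,
where `g₀(t) = e^{ist}` and `g_{k+1}'' + s² g_{k+1} = -g_k`, solved by Duhamel's formula.

* Separation of variables (`euclLap_sepFun`) and the recursion make `(Δ + s²) v` telescope to its
  last term, of size `R^{n/2} R^{2N+2} |g_N|` (`euclLap_beam`).
* Each Duhamel step gains a factor `τ⁻¹ = R⁻⁴` (`norm_beamAmp_le`), so the `k`-th term of `v` is
  smaller than the leading one by `R^{-2k}`, and the residual is `O(R^{n + 2 - 2N})`, that is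
  `O(τ^{-K})` for `N` large.
* In the coordinates `(t, y) = (x₀, R x')` the Jacobian `R⁻ⁿ` cancels the normalisation, the
  integrand of `∫_B |v|² ψ` is dominated by a fixed compactly supported function
  (`norm_zoomed_le`), and it converges a.e. to `1_{(0,L]}(t) e^{-2λt} ψ(t e₁) |χ(y)|²`
  (`tendsto_zoomed`). Dominated convergence gives the concentration limit, and the majorant gives
  the `L²` bound.
-/

open Filter Topology MeasureTheory

/-- The second derivative of `f` at `x` in the direction `v`. -/
noncomputable def secondDeriv {E : Type*} [NormedAddCommGroup E] [NormedSpace ℝ E]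
    (f : E → ℂ) (x v : E) : ℂ :=
  fderiv ℝ (fun y => fderiv ℝ f y v) x v

/-- The Euclidean Laplacian `Δf = ∑ᵢ ∂ᵢ²f` on `ℝᵐ`. -/
noncomputable def euclLap {m : ℕ} (f : EuclideanSpace ℝ (Fin m) → ℂ)
    (x : EuclideanSpace ℝ (Fin m)) : ℂ :=
  ∑ i, secondDeriv f x (EuclideanSpace.single i 1)

/-! ### The longitudinal amplitudes -/

/-- Duhamel's formula `g(t) = -s⁻¹ ∫₀ᵗ sin(s(t-r)) h(r) dr`, with the sine expanded, for the
solution of `g'' + s² g = -h`, `g(0) = g'(0) = 0`. -/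
noncomputable def duhamel (s : ℂ) (h : ℝ → ℂ) (t : ℝ) : ℂ :=
  -(1 / s) * (Complex.sin (s * t) * (∫ r in (0 : ℝ)..t, Complex.cos (s * r) * h r) -
    Complex.cos (s * t) * ∫ r in (0 : ℝ)..t, Complex.sin (s * r) * h r)

/-- The first derivative of `duhamel s h`. -/
noncomputable def duhamel' (s : ℂ) (h : ℝ → ℂ) (t : ℝ) : ℂ :=
  -(Complex.cos (s * t) * (∫ r in (0 : ℝ)..t, Complex.cos (s * r) * h r) +
    Complex.sin (s * t) * ∫ r in (0 : ℝ)..t, Complex.sin (s * r) * h r)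

lemma hasDerivAt_sin_mul (s : ℂ) (t : ℝ) :
    HasDerivAt (fun t : ℝ => Complex.sin (s * t)) (s * Complex.cos (s * t)) t := by
  have h1 : HasDerivAt (fun t : ℝ => s * (t : ℂ)) s t := by
    simpa using (Complex.ofRealCLM.hasDerivAt (x := t)).const_mul s
  refine ((Complex.hasDerivAt_sin (s * t)).comp t h1).congr_deriv ?_
  ring

lemma hasDerivAt_cos_mul (s : ℂ) (t : ℝ) :
    HasDerivAt (fun t : ℝ => Complex.cos (s * t)) (-(s * Complex.sin (s * t))) t := by
  have h1 : HasDerivAt (fun t : ℝ => s * (t : ℂ)) s t := by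
    simpa using (Complex.ofRealCLM.hasDerivAt (x := t)).const_mul s
  refine ((Complex.hasDerivAt_cos (s * t)).comp t h1).congr_deriv ?_
  ring

lemma hasDerivAt_primitive {f : ℝ → ℂ} (hf : Continuous f) (t : ℝ) :
    HasDerivAt (fun t : ℝ => ∫ r in (0 : ℝ)..t, f r) (f t) t :=
  intervalIntegral.integral_hasDerivAt_right (hf.intervalIntegrable _ _)
    (hf.stronglyMeasurableAtFilter _ _) hf.continuousAt

lemma continuous_cos_mul (s : ℂ) : Continuous fun t : ℝ => Complex.cos (s * t) := by fun_prop

lemma continuous_sin_mul (s : ℂ) : Continuous fun t : ℝ => Complex.sin (s * t) := by fun_prop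

lemma hasDerivAt_duhamel {s : ℂ} (hs : s ≠ 0) {h : ℝ → ℂ} (hh : Continuous h) (t : ℝ) :
    HasDerivAt (duhamel s h) (duhamel' s h t) t := by
  have hP := hasDerivAt_primitive (f := fun r => Complex.cos (s * r) * h r)
    ((continuous_cos_mul s).mul hh) t
  have hQ := hasDerivAt_primitive (f := fun r => Complex.sin (s * r) * h r)
    ((continuous_sin_mul s).mul hh) t
  have := (((hasDerivAt_sin_mul s t).mul hP).sub ((hasDerivAt_cos_mul s t).mul hQ)).const_mul
    (-(1 / s))
  refine this.congr_deriv ?_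
  simp only [duhamel']
  field_simp
  ring

lemma hasDerivAt_duhamel' (s : ℂ) {h : ℝ → ℂ} (hh : Continuous h) (t : ℝ) :
    HasDerivAt (duhamel' s h) (-h t - s ^ 2 * duhamel s h t) t := by
  have hP := hasDerivAt_primitive (f := fun r => Complex.cos (s * r) * h r)
    ((continuous_cos_mul s).mul hh) t
  have hQ := hasDerivAt_primitive (f := fun r => Complex.sin (s * r) * h r)
    ((continuous_sin_mul s).mul hh) t
  have := (((hasDerivAt_cos_mul s t).mul hP).add ((hasDerivAt_sin_mul s t).mul hQ)).neg
  refine this.congr_deriv ?_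
  simp only [duhamel]
  have hsc := Complex.sin_sq_add_cos_sq (s * t)
  field_simp
  linear_combination (-h t) * hsc

lemma contDiff_primitive {f : ℝ → ℂ} (hf : ContDiff ℝ (⊤ : ℕ∞) f) :
    ContDiff ℝ (⊤ : ℕ∞) (fun t : ℝ => ∫ r in (0 : ℝ)..t, f r) := by
  have h := hasDerivAt_primitive hf.continuous
  refine contDiff_infty_iff_deriv.2 ⟨fun t => (h t).differentiableAt, ?_⟩
  rwa [show deriv (fun t : ℝ => ∫ r in (0 : ℝ)..t, f r) = f from funext fun t => (h t).deriv]

lemma contDiff_sin_mul (s : ℂ) : ContDiff ℝ (⊤ : ℕ∞) fun t : ℝ => Complex.sin (s * t) :=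
  (Complex.contDiff_sin.restrict_scalars ℝ).comp
    (contDiff_const.mul Complex.ofRealCLM.contDiff)

lemma contDiff_cos_mul (s : ℂ) : ContDiff ℝ (⊤ : ℕ∞) fun t : ℝ => Complex.cos (s * t) :=
  (Complex.contDiff_cos.restrict_scalars ℝ).comp
    (contDiff_const.mul Complex.ofRealCLM.contDiff)

lemma contDiff_duhamel (s : ℂ) {h : ℝ → ℂ} (hh : ContDiff ℝ (⊤ : ℕ∞) h) :
    ContDiff ℝ (⊤ : ℕ∞) (duhamel s h) :=
  contDiff_const.mul
    (((contDiff_sin_mul s).mul (contDiff_primitive ((contDiff_cos_mul s).mul hh))).sub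
      ((contDiff_cos_mul s).mul (contDiff_primitive ((contDiff_sin_mul s).mul hh))))

/-- The longitudinal amplitudes: `g₀(t) = e^{ist}` and `g_{k+1}'' + s² g_{k+1} = -g_k`. -/
noncomputable def beamAmp (s : ℂ) : ℕ → ℝ → ℂ
  | 0 => fun t => Complex.exp (Complex.I * s * t)
  | k + 1 => duhamel s (beamAmp s k)

lemma hasDerivAt_exp_mul (a : ℂ) (t : ℝ) :
    HasDerivAt (fun t : ℝ => Complex.exp (a * t)) (a * Complex.exp (a * t)) t := by
  have h1 : HasDerivAt (fun t : ℝ => a * (t : ℂ)) a t := by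
    simpa using (Complex.ofRealCLM.hasDerivAt (x := t)).const_mul a
  refine ((Complex.hasDerivAt_exp (a * t)).comp t h1).congr_deriv ?_
  ring

lemma contDiff_beamAmp (s : ℂ) (k : ℕ) : ContDiff ℝ (⊤ : ℕ∞) (beamAmp s k) := by
  induction k with
  | zero =>
    exact ((Complex.contDiff_exp (𝕜 := ℂ)).restrict_scalars ℝ).comp
      (contDiff_const.mul Complex.ofRealCLM.contDiff)
  | succ k ih => exact contDiff_duhamel s ih

lemma deriv_deriv_beamAmp_zero (s : ℂ) (t : ℝ) :
    deriv (deriv (beamAmp s 0)) t = -s ^ 2 * beamAmp s 0 t := by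
  have h1 : deriv (beamAmp s 0) = fun t : ℝ => (Complex.I * s) * Complex.exp (Complex.I * s * t) :=
    funext fun t => (hasDerivAt_exp_mul _ t).deriv
  rw [h1, ((hasDerivAt_exp_mul (Complex.I * s) t).const_mul (Complex.I * s)).deriv]
  simp only [beamAmp]
  linear_combination s ^ 2 * Complex.exp (Complex.I * s * t) * Complex.I_sq

lemma deriv_deriv_beamAmp_succ {s : ℂ} (hs : s ≠ 0) (k : ℕ) (t : ℝ) :
    deriv (deriv (beamAmp s (k + 1))) t = -beamAmp s k t - s ^ 2 * beamAmp s (k + 1) t := by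
  have hc := (contDiff_beamAmp s k).continuous
  have h1 : deriv (beamAmp s (k + 1)) = duhamel' s (beamAmp s k) :=
    funext fun t => (hasDerivAt_duhamel hs hc t).deriv
  rw [h1, (hasDerivAt_duhamel' s hc t).deriv]
  rfl

lemma norm_exp_mul_I_le (z : ℂ) : ‖Complex.exp (z * Complex.I)‖ ≤ Real.exp |z.im| := by
  rw [Complex.norm_exp]
  apply Real.exp_le_exp.2
  simpa using neg_le_abs z.im

lemma norm_exp_neg_mul_I_le (z : ℂ) : ‖Complex.exp (-z * Complex.I)‖ ≤ Real.exp |z.im| := by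
  simpa using norm_exp_mul_I_le (-z)

lemma norm_cos_le_exp (z : ℂ) : ‖Complex.cos z‖ ≤ Real.exp |z.im| := by
  have h := norm_add_le (Complex.exp (z * Complex.I)) (Complex.exp (-z * Complex.I))
  have h1 := norm_exp_mul_I_le z
  have h2 := norm_exp_neg_mul_I_le z
  rw [Complex.cos, norm_div, Complex.norm_ofNat]
  linarith

lemma norm_sin_le_exp (z : ℂ) : ‖Complex.sin z‖ ≤ Real.exp |z.im| := by
  have h := norm_sub_le (Complex.exp (-z * Complex.I)) (Complex.exp (z * Complex.I))
  have h1 := norm_exp_mul_I_le z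
  have h2 := norm_exp_neg_mul_I_le z
  rw [Complex.sin, norm_div, norm_mul, Complex.norm_I, mul_one, Complex.norm_ofNat]
  linarith

/-- Each step of the recursion gains a factor `τ⁻¹`, uniformly on `[0, L]`; this holds because
`sin` and `cos` stay bounded in the strip `|Im z| ≤ |λ| L`. -/
lemma norm_beamAmp_le {L lam τ : ℝ} (hL : 0 < L) (hτ : 1 ≤ τ) (k : ℕ) {t : ℝ}
    (ht : t ∈ Set.Icc 0 L) :
    ‖beamAmp ((τ : ℂ) + lam * Complex.I) k t‖ ≤
      Real.exp (|lam| * L) * (2 * Real.exp (|lam| * L) ^ 2 * L / τ) ^ k := by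
  set s : ℂ := (τ : ℂ) + lam * Complex.I with hs
  set E := Real.exp (|lam| * L) with hE
  have hE0 : 0 < E := Real.exp_pos _
  have him : s.im = lam := by simp [hs]
  have hre : s.re = τ := by simp [hs]
  have hmul : ∀ u ∈ Set.Icc (0 : ℝ) L, |(s * u).im| ≤ |lam| * L := by
    intro u hu
    simp only [Complex.mul_im, Complex.ofReal_re, Complex.ofReal_im, him, mul_zero, zero_add]
    rw [abs_mul, abs_of_nonneg hu.1]
    exact mul_le_mul_of_nonneg_left hu.2 (abs_nonneg _)
  have hcos : ∀ u ∈ Set.Icc (0 : ℝ) L, ‖Complex.cos (s * u)‖ ≤ E := fun u hu =>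
    (norm_cos_le_exp _).trans (Real.exp_le_exp.2 (hmul u hu))
  have hsin : ∀ u ∈ Set.Icc (0 : ℝ) L, ‖Complex.sin (s * u)‖ ≤ E := fun u hu =>
    (norm_sin_le_exp _).trans (Real.exp_le_exp.2 (hmul u hu))
  have hsn : τ ≤ ‖s‖ := by
    have := Complex.abs_re_le_norm s
    rw [hre] at this
    exact (le_abs_self _).trans this
  induction k generalizing t with
  | zero =>
    simp only [beamAmp, pow_zero, mul_one]
    rw [show Complex.I * s * t = (s * t) * Complex.I by ring]
    exact (norm_exp_mul_I_le _).trans (Real.exp_le_exp.2 (hmul t ht))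
  | succ k ih =>
    set b := E * (2 * E ^ 2 * L / τ) ^ k with hb
    have hb0 : 0 ≤ b := by positivity
    have key : ∀ f : ℝ → ℂ, (∀ u ∈ Set.Icc (0 : ℝ) L, ‖f u‖ ≤ E) →
        ‖∫ r in (0 : ℝ)..t, f r * beamAmp s k r‖ ≤ E * b * L := by
      intro f hf
      have h := intervalIntegral.norm_integral_le_of_norm_le_const (a := 0) (b := t) (C := E * b)
        (f := fun r => f r * beamAmp s k r) (by
          intro r hr
          rw [Set.uIoc_of_le ht.1] at hr
          have hr' : r ∈ Set.Icc (0 : ℝ) L := ⟨hr.1.le, hr.2.trans ht.2⟩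
          rw [norm_mul]
          exact mul_le_mul (hf r hr') (ih hr') (norm_nonneg _) hE0.le)
      refine h.trans ?_
      rw [sub_zero, abs_of_nonneg ht.1]
      exact mul_le_mul_of_nonneg_left ht.2 (by positivity)
    have h1 := mul_le_mul (hsin t ht) (key _ hcos) (norm_nonneg _) hE0.le
    have h2 := mul_le_mul (hcos t ht) (key _ hsin) (norm_nonneg _) hE0.le
    rw [← norm_mul] at h1 h2
    have h3 := (norm_sub_le _ _).trans (add_le_add h1 h2)
    have h4 : ‖(-(1 / s) : ℂ)‖ ≤ 1 / τ := by
      rw [norm_neg, norm_div, norm_one]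
      exact one_div_le_one_div_of_le (by linarith) hsn
    calc ‖beamAmp s (k + 1) t‖ ≤ 1 / τ * (E * (E * b * L) + E * (E * b * L)) := by
          change ‖duhamel s (beamAmp s k) t‖ ≤ _
          rw [duhamel, norm_mul]
          exact mul_le_mul h4 h3 (norm_nonneg _) (by positivity)
      _ = _ := by rw [hb, pow_succ]; ring

lemma norm_beamAmp_zero_sq (lam τ t : ℝ) :
    ‖beamAmp ((τ : ℂ) + lam * Complex.I) 0 t‖ ^ 2 = Real.exp (-2 * lam * t) := by
  simp only [beamAmp, Complex.norm_exp]
  rw [← Real.exp_nat_mul]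
  congr 1
  simp
  ring

/-! ### The Laplacian in split coordinates -/

/-- The transverse coordinates `x' = (x₁, …, xₙ)` of `x = (x₀, x') ∈ ℝⁿ⁺¹`. -/
noncomputable def tailL (n : ℕ) : EuclideanSpace ℝ (Fin (n + 1)) →L[ℝ] (Fin n → ℝ) :=
  ContinuousLinearMap.pi fun i => EuclideanSpace.proj i.succ

/-- The Laplacian on `ℝⁿ`, with coordinate space `Fin n → ℝ` carrying the sup norm (which plays
no role for derivatives). -/
noncomputable def transLap {n : ℕ} (G : (Fin n → ℝ) → ℂ) (y : Fin n → ℝ) : ℂ :=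
  ∑ i, secondDeriv G y (Pi.single i 1)

/-- The separated function `x ↦ g(x₀) G(R x')`. -/
noncomputable def sepFun {n : ℕ} (R : ℝ) (g : ℝ → ℂ) (G : (Fin n → ℝ) → ℂ)
    (x : EuclideanSpace ℝ (Fin (n + 1))) : ℂ :=
  g (x 0) * G (R • tailL n x)

lemma contDiff_fderiv_apply {E : Type*} [NormedAddCommGroup E] [NormedSpace ℝ E]
    {f : E → ℂ} (hf : ContDiff ℝ (⊤ : ℕ∞) f) (v : E) :
    ContDiff ℝ (⊤ : ℕ∞) fun y => fderiv ℝ f y v :=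
  (hf.fderiv_right (m := (⊤ : ℕ∞)) le_rfl).clm_apply contDiff_const

lemma contDiff_secondDeriv {E : Type*} [NormedAddCommGroup E] [NormedSpace ℝ E]
    {f : E → ℂ} (hf : ContDiff ℝ (⊤ : ℕ∞) f) (v : E) :
    ContDiff ℝ (⊤ : ℕ∞) fun y => secondDeriv f y v :=
  contDiff_fderiv_apply (contDiff_fderiv_apply hf v) v

lemma contDiff_transLap {n : ℕ} {G : (Fin n → ℝ) → ℂ} (hG : ContDiff ℝ (⊤ : ℕ∞) G) :
    ContDiff ℝ (⊤ : ℕ∞) (transLap G) :=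
  ContDiff.sum fun _ _ => contDiff_secondDeriv hG _

lemma hasCompactSupport_sum {X ι : Type*} [TopologicalSpace X] {E : Type*} [AddCommMonoid E]
    (s : Finset ι) {f : ι → X → E} (hf : ∀ i ∈ s, HasCompactSupport (f i)) :
    HasCompactSupport fun x => ∑ i ∈ s, f i x := by
  classical
  induction s using Finset.induction_on with
  | empty => exact HasCompactSupport.zero
  | insert a s ha ih =>
    simp only [Finset.sum_insert ha]
    exact (hf a (by simp)).add (ih fun i hi => hf i (by simp [hi]))

lemma hasCompactSupport_transLap {n : ℕ} {G : (Fin n → ℝ) → ℂ} (hG : HasCompactSupport G) :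
    HasCompactSupport (transLap G) :=
  hasCompactSupport_sum _ fun _ _ => (hG.fderiv_apply ℝ _).fderiv_apply ℝ _

lemma contDiff_sepFun {n : ℕ} (R : ℝ) {g : ℝ → ℂ} {G : (Fin n → ℝ) → ℂ}
    (hg : ContDiff ℝ (⊤ : ℕ∞) g) (hG : ContDiff ℝ (⊤ : ℕ∞) G) :
    ContDiff ℝ (⊤ : ℕ∞) (sepFun R g G) :=
  (hg.comp (EuclideanSpace.proj (𝕜 := ℝ) (0 : Fin (n + 1))).contDiff).mul
    (hG.comp (R • tailL n).contDiff)

lemma fderiv_sepFun {n : ℕ} (R : ℝ) {g : ℝ → ℂ} {G : (Fin n → ℝ) → ℂ}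
    (hg : ContDiff ℝ (⊤ : ℕ∞) g) (hG : ContDiff ℝ (⊤ : ℕ∞) G)
    (x v : EuclideanSpace ℝ (Fin (n + 1))) :
    fderiv ℝ (sepFun R g G) x v =
      v 0 * sepFun R (deriv g) G x +
        R * sepFun R g (fun y => fderiv ℝ G y (tailL n v)) x := by
  have h1 : HasFDerivAt (fun x : EuclideanSpace ℝ (Fin (n + 1)) => g (x 0))
      ((ContinuousLinearMap.toSpanSingleton ℝ (deriv g (x 0))).comp
        (EuclideanSpace.proj (𝕜 := ℝ) (0 : Fin (n + 1)))) x :=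
    HasFDerivAt.comp x (g := g) ((hg.differentiable (by simp)) (x 0)).hasDerivAt.hasFDerivAt
      (EuclideanSpace.proj (𝕜 := ℝ) (0 : Fin (n + 1))).hasFDerivAt
  have h2 : HasFDerivAt (fun x : EuclideanSpace ℝ (Fin (n + 1)) => G (R • tailL n x))
      ((fderiv ℝ G (R • tailL n x)).comp (R • tailL n)) x :=
    HasFDerivAt.comp x (g := G) ((hG.differentiable (by simp)) _).hasFDerivAt
      (R • tailL n).hasFDerivAt
  have h3 := h1.mul h2
  have h4 : fderiv ℝ (sepFun R g G) x = _ := h3.fderiv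
  rw [h4]
  simp [sepFun]
  ring

lemma secondDeriv_sum {E ι : Type*} [NormedAddCommGroup E] [NormedSpace ℝ E]
    (s : Finset ι) {f : ι → E → ℂ} (hf : ∀ i, ContDiff ℝ (⊤ : ℕ∞) (f i)) (x v : E) :
    secondDeriv (fun y => ∑ i ∈ s, f i y) x v = ∑ i ∈ s, secondDeriv (f i) x v := by
  unfold secondDeriv
  have h1 : (fun y => fderiv ℝ (fun y => ∑ i ∈ s, f i y) y v) =
      fun y => ∑ i ∈ s, fderiv ℝ (f i) y v := by
    funext y
    rw [fderiv_fun_sum fun i _ => (hf i).differentiable (by simp) y]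
    simp
  rw [h1, fderiv_fun_sum fun i _ => (contDiff_fderiv_apply (hf i) v).differentiable (by simp) x]
  simp

lemma secondDeriv_const_mul {E : Type*} [NormedAddCommGroup E] [NormedSpace ℝ E]
    (c : ℂ) {f : E → ℂ} (hf : ContDiff ℝ (⊤ : ℕ∞) f) (x v : E) :
    secondDeriv (fun y => c * f y) x v = c * secondDeriv f x v := by
  unfold secondDeriv
  have h1 : (fun y => fderiv ℝ (fun y => c * f y) y v) = fun y => c * fderiv ℝ f y v := by
    funext y
    rw [fderiv_const_mul (hf.differentiable (by simp) y)]
    simp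
  rw [h1, fderiv_const_mul ((contDiff_fderiv_apply hf v).differentiable (by simp) x)]
  simp

lemma secondDeriv_sepFun_zero {n : ℕ} (R : ℝ) {g : ℝ → ℂ} {G : (Fin n → ℝ) → ℂ}
    (hg : ContDiff ℝ (⊤ : ℕ∞) g) (hG : ContDiff ℝ (⊤ : ℕ∞) G)
    (x : EuclideanSpace ℝ (Fin (n + 1))) :
    secondDeriv (sepFun R g G) x (EuclideanSpace.single 0 1) =
      sepFun R (deriv (deriv g)) G x := by
  have hv : tailL n (EuclideanSpace.single 0 1) = 0 := by
    ext i; simp [tailL]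
  have key : ∀ {g : ℝ → ℂ}, ContDiff ℝ (⊤ : ℕ∞) g → ∀ x,
      fderiv ℝ (sepFun R g G) x (EuclideanSpace.single 0 1) = sepFun R (deriv g) G x := by
    intro g hg x
    rw [fderiv_sepFun R hg hG, hv]
    simp [sepFun]
  unfold secondDeriv
  rw [funext (key hg), key (contDiff_infty_iff_deriv.1 hg).2]

lemma secondDeriv_sepFun_succ {n : ℕ} (R : ℝ) {g : ℝ → ℂ} {G : (Fin n → ℝ) → ℂ}
    (hg : ContDiff ℝ (⊤ : ℕ∞) g) (hG : ContDiff ℝ (⊤ : ℕ∞) G)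
    (x : EuclideanSpace ℝ (Fin (n + 1))) (i : Fin n) :
    secondDeriv (sepFun R g G) x (EuclideanSpace.single i.succ 1) =
      R ^ 2 * sepFun R g (fun y => secondDeriv G y (Pi.single i 1)) x := by
  have hv : tailL n (EuclideanSpace.single i.succ 1) = Pi.single i 1 := by
    ext j; simp [tailL, Pi.single_apply]
  have key : ∀ {G : (Fin n → ℝ) → ℂ}, ContDiff ℝ (⊤ : ℕ∞) G → ∀ x,
      fderiv ℝ (sepFun R g G) x (EuclideanSpace.single i.succ 1) =
        R * sepFun R g (fun y => fderiv ℝ G y (Pi.single i 1)) x := by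
    intro G hG x
    rw [fderiv_sepFun R hg hG, hv]
    simp [sepFun, (Fin.succ_ne_zero i).symm]
  have hG' := contDiff_fderiv_apply hG (Pi.single i 1)
  unfold secondDeriv
  rw [funext (key hG), fderiv_const_mul ((contDiff_sepFun R hg hG').differentiable (by simp) x)]
  simp only [smul_apply, smul_eq_mul]
  rw [key hG']
  ring

/-- Separation of variables: `Δ(g(x₀) G(R x')) = g''(x₀) G(R x') + R² g(x₀) (Δ'G)(R x')`. -/
lemma euclLap_sepFun {n : ℕ} (R : ℝ) {g : ℝ → ℂ} {G : (Fin n → ℝ) → ℂ}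
    (hg : ContDiff ℝ (⊤ : ℕ∞) g) (hG : ContDiff ℝ (⊤ : ℕ∞) G)
    (x : EuclideanSpace ℝ (Fin (n + 1))) :
    euclLap (sepFun R g G) x =
      sepFun R (deriv (deriv g)) G x + R ^ 2 * sepFun R g (transLap G) x := by
  rw [euclLap, Fin.sum_univ_succ, secondDeriv_sepFun_zero R hg hG]
  simp only [secondDeriv_sepFun_succ R hg hG]
  simp only [sepFun, transLap, Finset.mul_sum]

/-! ### The quasimode and its residual -/

/-- The profiles `(Δ')ᵏ χ`. -/
noncomputable def profile {n : ℕ} (χ : (Fin n → ℝ) → ℂ) : ℕ → (Fin n → ℝ) → ℂ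
  | 0 => χ
  | k + 1 => transLap (profile χ k)

lemma contDiff_profile {n : ℕ} {χ : (Fin n → ℝ) → ℂ} (hχ : ContDiff ℝ (⊤ : ℕ∞) χ) (k : ℕ) :
    ContDiff ℝ (⊤ : ℕ∞) (profile χ k) := by
  induction k with
  | zero => exact hχ
  | succ k ih => exact contDiff_transLap ih

lemma hasCompactSupport_profile {n : ℕ} {χ : (Fin n → ℝ) → ℂ} (hχ : HasCompactSupport χ)
    (k : ℕ) : HasCompactSupport (profile χ k) := by
  induction k with
  | zero => exact hχ
  | succ k ih => exact hasCompactSupport_transLap ih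

/-- The unnormalised quasimode `∑_{k ≤ N} R²ᵏ g_k(x₀) ((Δ')ᵏ χ)(R x')`. -/
noncomputable def beam {n : ℕ} (χ : (Fin n → ℝ) → ℂ) (s : ℂ) (R : ℝ) (N : ℕ)
    (x : EuclideanSpace ℝ (Fin (n + 1))) : ℂ :=
  ∑ k ∈ Finset.range (N + 1), (R : ℂ) ^ (2 * k) * sepFun R (beamAmp s k) (profile χ k) x

lemma contDiff_beam_term {n : ℕ} {χ : (Fin n → ℝ) → ℂ} (hχ : ContDiff ℝ (⊤ : ℕ∞) χ)
    (s : ℂ) (R : ℝ) (k : ℕ) : ContDiff ℝ (⊤ : ℕ∞) fun x =>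
      (R : ℂ) ^ (2 * k) * sepFun R (beamAmp s k) (profile χ k) x :=
  contDiff_const.mul (contDiff_sepFun R (contDiff_beamAmp s k) (contDiff_profile hχ k))

lemma contDiff_beam {n : ℕ} {χ : (Fin n → ℝ) → ℂ} (hχ : ContDiff ℝ (⊤ : ℕ∞) χ)
    (s : ℂ) (R : ℝ) (N : ℕ) : ContDiff ℝ (⊤ : ℕ∞) (beam χ s R N) :=
  ContDiff.sum fun k _ => contDiff_beam_term hχ s R k

/-- The recursion for the amplitudes makes the residual telescope to its last term. -/
lemma euclLap_beam {n : ℕ} {χ : (Fin n → ℝ) → ℂ} (hχ : ContDiff ℝ (⊤ : ℕ∞) χ)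
    {s : ℂ} (hs : s ≠ 0) (R : ℝ) (N : ℕ) (x : EuclideanSpace ℝ (Fin (n + 1))) :
    euclLap (beam χ s R N) x + s ^ 2 * beam χ s R N x =
      (R : ℂ) ^ (2 * N + 2) * sepFun R (beamAmp s N) (profile χ (N + 1)) x := by
  have h1 : euclLap (beam χ s R N) x = ∑ k ∈ Finset.range (N + 1), (R : ℂ) ^ (2 * k) *
      euclLap (sepFun R (beamAmp s k) (profile χ k)) x := by
    simp only [euclLap, Finset.mul_sum]
    rw [Finset.sum_comm]
    refine Finset.sum_congr rfl fun i _ => ?_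
    have h := secondDeriv_sum (Finset.range (N + 1))
      (fun k => contDiff_beam_term hχ s R k) x (EuclideanSpace.single i 1)
    refine h.trans (Finset.sum_congr rfl fun k _ => ?_)
    exact secondDeriv_const_mul _
      (contDiff_sepFun R (contDiff_beamAmp s k) (contDiff_profile hχ k)) _ _
  have h2 : ∀ k, euclLap (sepFun R (beamAmp s k) (profile χ k)) x =
      sepFun R (deriv (deriv (beamAmp s k))) (profile χ k) x +
        R ^ 2 * sepFun R (beamAmp s k) (profile χ (k + 1)) x := fun k =>
    euclLap_sepFun R (contDiff_beamAmp s k) (contDiff_profile hχ k) x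
  rw [h1, beam, Finset.mul_sum, ← Finset.sum_add_distrib]
  simp only [h2]
  clear h1
  induction N with
  | zero =>
    simp only [sepFun, deriv_deriv_beamAmp_zero, zero_add, Finset.range_one,
      Finset.sum_singleton]
    ring
  | succ N ih =>
    rw [Finset.sum_range_succ, ih]
    simp only [sepFun, deriv_deriv_beamAmp_succ hs]
    ring

/-! ### Beam coordinates -/

/-- The point `(t, y) ∈ ℝ × ℝⁿ` as a point of Euclidean space `ℝⁿ⁺¹`. -/
noncomputable def beamPt (n : ℕ) : ℝ × (Fin n → ℝ) ≃ᵐ EuclideanSpace ℝ (Fin (n + 1)) :=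
  (MeasurableEquiv.piFinSuccAbove (fun _ : Fin (n + 1) => ℝ) 0).symm.trans
    (MeasurableEquiv.toLp 2 (Fin (n + 1) → ℝ))

@[simp] lemma beamPt_zero {n : ℕ} (p : ℝ × (Fin n → ℝ)) : beamPt n p 0 = p.1 := by
  simp [beamPt, MeasurableEquiv.piFinSuccAbove]

@[simp] lemma beamPt_succ {n : ℕ} (p : ℝ × (Fin n → ℝ)) (i : Fin n) :
    beamPt n p i.succ = p.2 i := by
  simp [beamPt, MeasurableEquiv.piFinSuccAbove]

lemma measurePreserving_beamPt (n : ℕ) :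
    MeasurePreserving (beamPt n) (volume : Measure (ℝ × (Fin n → ℝ))) volume :=
  ((EuclideanSpace.volume_preserving_symm_measurableEquiv_toLp (Fin (n + 1))).symm _).comp
    ((volume_preserving_piFinSuccAbove (fun _ : Fin (n + 1) => ℝ) 0).symm _)

lemma continuous_beamPt (n : ℕ) : Continuous (beamPt n) := by
  refine (PiLp.continuous_toLp 2 (fun _ : Fin (n + 1) => ℝ)).comp
    (f := fun p : ℝ × (Fin n → ℝ) => (WithLp.ofLp (beamPt n p))) ?_
  refine continuous_pi fun i => ?_
  refine Fin.cases ?_ (fun j => ?_) i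
  · simpa using continuous_fst
  · simp only [beamPt_succ]
    fun_prop

lemma beamPt_axis {n : ℕ} (t : ℝ) :
    beamPt n (t, 0) = t • EuclideanSpace.single (0 : Fin (n + 1)) (1 : ℝ) := by
  ext i
  refine Fin.cases ?_ (fun j => ?_) i
  · simp
  · simp

/-- Zooming in on the axis by the factor `R`: `dx = R⁻ⁿ dt dy` for `x = (t, R⁻¹ y)`. -/
lemma integral_zoom {n : ℕ} {R : ℝ} (hR : 0 < R) (f : EuclideanSpace ℝ (Fin (n + 1)) → ℂ) :
    ∫ x, f x = ((R ^ n)⁻¹ : ℝ) * ∫ p : ℝ × (Fin n → ℝ), f (beamPt n (p.1, R⁻¹ • p.2)) := by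
  rw [← (measurePreserving_beamPt n).integral_comp']
  have hR' : R ≠ 0 := hR.ne'
  let e : ℝ × (Fin n → ℝ) ≃ᵐ ℝ × (Fin n → ℝ) :=
    (MeasurableEquiv.refl ℝ).prodCongr (MeasurableEquiv.smul₀ R⁻¹ (inv_ne_zero hR'))
  have hmap : Measure.map e volume =
      ENNReal.ofReal (R ^ n) • (volume : Measure (ℝ × (Fin n → ℝ))) := by
    have h1 := Measure.map_prod_map (volume : Measure ℝ) (volume : Measure (Fin n → ℝ))
      (f := id) (g := fun y => R⁻¹ • y) measurable_id (measurable_const_smul _)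
    rw [Measure.map_id, Measure.map_addHaar_smul _ (inv_ne_zero hR'),
      Measure.prod_smul_right] at h1
    simp only [Module.finrank_fintype_fun_eq_card, Fintype.card_fin, inv_pow, inv_inv,
      abs_of_pos (pow_pos hR n)] at h1
    exact h1.symm
  have h2 : ∫ p : ℝ × (Fin n → ℝ), f (beamPt n (p.1, R⁻¹ • p.2)) =
      ∫ p, f (beamPt n p) ∂(Measure.map e volume) :=
    (integral_map_equiv e (fun p => f (beamPt n p))).symm
  rw [h2, hmap, integral_smul_measure, ENNReal.toReal_ofReal (by positivity),
    Complex.real_smul, ← mul_assoc, ← Complex.ofReal_mul, inv_mul_cancel₀ (by positivity)]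
  simp

lemma sepFun_beamPt {n : ℕ} {R : ℝ} (hR : R ≠ 0) (g : ℝ → ℂ) (G : (Fin n → ℝ) → ℂ)
    (p : ℝ × (Fin n → ℝ)) :
    sepFun R g G (beamPt n (p.1, R⁻¹ • p.2)) = g p.1 * G p.2 := by
  have h : R • tailL n (beamPt n (p.1, R⁻¹ • p.2)) = p.2 := by
    ext i
    simp [tailL, hR]
  rw [sepFun, h, beamPt_zero]

/-- The closed ball having the segment from `0` to `L e₁` as a diameter. -/
noncomputable def beamBall (n : ℕ) (L : ℝ) : Set (EuclideanSpace ℝ (Fin (n + 1))) :=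
  Metric.closedBall ((L / 2) • EuclideanSpace.single (0 : Fin (n + 1)) (1 : ℝ)) (L / 2)

lemma measurableSet_beamBall (n : ℕ) (L : ℝ) : MeasurableSet (beamBall n L) :=
  Metric.isClosed_closedBall.measurableSet

lemma zero_coord_mem {n : ℕ} {L : ℝ} {x : EuclideanSpace ℝ (Fin (n + 1))}
    (hx : x ∈ beamBall n L) : x 0 ∈ Set.Icc 0 L := by
  rw [beamBall, Metric.mem_closedBall, dist_eq_norm] at hx
  have h := (PiLp.norm_apply_le _ (0 : Fin (n + 1))).trans hx
  simp [abs_le] at h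
  constructor <;> linarith

lemma beamBall_mem_nhds {n : ℕ} {L t : ℝ} (ht : t ∈ Set.Ioo 0 L) :
    beamBall n L ∈ 𝓝 (beamPt n (t, 0)) := by
  refine mem_of_superset (Metric.isOpen_ball.mem_nhds ?_) Metric.ball_subset_closedBall
  rw [beamPt_axis, Metric.mem_ball, dist_eq_norm, ← sub_smul, norm_smul,
    PiLp.norm_single]
  simp only [norm_one, mul_one, Real.norm_eq_abs, abs_lt]
  constructor <;> linarith [ht.1, ht.2]

/-! ### Estimates in beam coordinates -/

/-- The complex frequency `s = τ + iλ` with `τ = R⁴`. -/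
noncomputable def freq (lam R : ℝ) : ℂ := ((R ^ 4 : ℝ) : ℂ) + lam * Complex.I

/-- The majorant `∑_{k ≤ N} e^{|λ|L} Dᵏ |((Δ')ᵏ χ)(y)|`, `D = 2 e^{2|λ|L} L`, of the beam in
beam coordinates. -/
noncomputable def beamMaj {n : ℕ} (χ : (Fin n → ℝ) → ℂ) (L lam : ℝ) (N : ℕ)
    (y : Fin n → ℝ) : ℝ :=
  ∑ k ∈ Finset.range (N + 1),
    Real.exp (|lam| * L) * (2 * Real.exp (|lam| * L) ^ 2 * L) ^ k * ‖profile χ k y‖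

lemma integrable_beamMaj_sq {n : ℕ} {χ : (Fin n → ℝ) → ℂ} (hχ : ContDiff ℝ (⊤ : ℕ∞) χ)
    (hχc : HasCompactSupport χ) (L lam : ℝ) (N : ℕ) :
    Integrable fun y => beamMaj χ L lam N y ^ 2 := by
  have h1 : Continuous (beamMaj χ L lam N) :=
    continuous_finsetSum _ fun k _ =>
      continuous_const.mul (contDiff_profile hχ k).continuous.norm
  have h2 : HasCompactSupport (beamMaj χ L lam N) :=
    hasCompactSupport_sum _ fun k _ => (hasCompactSupport_profile hχc k).norm.mul_left
  have h3 : HasCompactSupport fun y => beamMaj χ L lam N y ^ 2 := by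
    simp only [sq]
    exact h2.mul_left (f := beamMaj χ L lam N)
  exact (h1.pow 2).integrable_of_hasCompactSupport h3

lemma norm_term_le {L lam R : ℝ} (hL : 0 < L) (hR : 1 ≤ R) (k : ℕ) {t : ℝ}
    (ht : t ∈ Set.Icc 0 L) (z : ℂ) :
    ‖(R : ℂ) ^ (2 * k) * (beamAmp (freq lam R) k t * z)‖ ≤
      Real.exp (|lam| * L) * (2 * Real.exp (|lam| * L) ^ 2 * L) ^ k * ‖z‖ * ((R ^ 2)⁻¹) ^ k := by
  have hR0 : 0 < R := by linarith
  have h := norm_beamAmp_le (lam := lam) hL (one_le_pow₀ hR : 1 ≤ R ^ 4) k ht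
  rw [norm_mul, norm_mul, norm_pow, Complex.norm_real, Real.norm_of_nonneg hR0.le]
  calc R ^ (2 * k) * (‖beamAmp (freq lam R) k t‖ * ‖z‖)
      ≤ R ^ (2 * k) * ((Real.exp (|lam| * L) *
          (2 * Real.exp (|lam| * L) ^ 2 * L / R ^ 4) ^ k) * ‖z‖) := by
        gcongr
        exact h
    _ = _ := by
        rw [div_pow, pow_mul, inv_pow, ← pow_mul R 4, ← pow_mul R 2]
        have : R ^ (4 * k) = R ^ (2 * k) * R ^ (2 * k) := by rw [← pow_add]; ring_nf
        rw [this]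
        field_simp

lemma beam_beamPt {n : ℕ} (χ : (Fin n → ℝ) → ℂ) (s : ℂ) {R : ℝ} (hR : R ≠ 0) (N : ℕ)
    (p : ℝ × (Fin n → ℝ)) :
    beam χ s R N (beamPt n (p.1, R⁻¹ • p.2)) = ∑ k ∈ Finset.range (N + 1),
      (R : ℂ) ^ (2 * k) * (beamAmp s k p.1 * profile χ k p.2) := by
  simp only [beam, sepFun_beamPt hR]

lemma norm_beam_le {n : ℕ} (χ : (Fin n → ℝ) → ℂ) {L lam R : ℝ} (hL : 0 < L) (hR : 1 ≤ R)
    (N : ℕ) {p : ℝ × (Fin n → ℝ)} (hp : p.1 ∈ Set.Icc 0 L) :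
    ‖beam χ (freq lam R) R N (beamPt n (p.1, R⁻¹ • p.2))‖ ≤ beamMaj χ L lam N p.2 := by
  have hR0 : 0 < R := by linarith
  rw [beam_beamPt χ _ hR0.ne']
  refine (norm_sum_le _ _).trans (Finset.sum_le_sum fun k _ => ?_)
  refine (norm_term_le hL hR k hp _).trans (mul_le_of_le_one_right (by positivity) ?_)
  exact pow_le_one₀ (by positivity) (inv_le_one_of_one_le₀ (one_le_pow₀ hR))

/-- In beam coordinates all terms but the leading one vanish in the limit. -/
lemma tendsto_norm_beam_sq {n : ℕ} (χ : (Fin n → ℝ) → ℂ) {L : ℝ} (lam : ℝ) (hL : 0 < L)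
    (N : ℕ) {p : ℝ × (Fin n → ℝ)} (hp : p.1 ∈ Set.Icc 0 L) :
    Tendsto (fun R : ℝ => ‖beam χ (freq lam R) R N (beamPt n (p.1, R⁻¹ • p.2))‖ ^ 2) atTop
      (𝓝 (Real.exp (-2 * lam * p.1) * ‖χ p.2‖ ^ 2)) := by
  have hlead : ∀ R : ℝ, ‖beamAmp (freq lam R) 0 p.1 * χ p.2‖ =
      Real.sqrt (Real.exp (-2 * lam * p.1)) * ‖χ p.2‖ := by
    intro R
    rw [norm_mul, freq, ← norm_beamAmp_zero_sq lam (R ^ 4), Real.sqrt_sq (norm_nonneg _)]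
  have hrest : Tendsto (fun R : ℝ => ∑ k ∈ Finset.range N,
      (R : ℂ) ^ (2 * (k + 1)) * (beamAmp (freq lam R) (k + 1) p.1 * profile χ (k + 1) p.2))
      atTop (𝓝 0) := by
    rw [show (0 : ℂ) = ∑ k ∈ Finset.range N, 0 by simp]
    refine tendsto_finsetSum _ fun k _ => ?_
    have hinv : Tendsto (fun R : ℝ => ((R ^ 2)⁻¹) ^ (k + 1)) atTop (𝓝 0) := by
      have := (tendsto_inv_atTop_zero.comp (tendsto_pow_atTop (α := ℝ) two_ne_zero)).pow (k + 1)
      simpa using this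
    have hb := hinv.const_mul (Real.exp (|lam| * L) *
      (2 * Real.exp (|lam| * L) ^ 2 * L) ^ (k + 1) * ‖profile χ (k + 1) p.2‖)
    rw [mul_zero] at hb
    refine squeeze_zero_norm' ?_ hb
    filter_upwards [eventually_ge_atTop 1] with R hR
    exact norm_term_le hL hR (k + 1) hp _
  have hnorm : Tendsto (fun R : ℝ => ‖beam χ (freq lam R) R N (beamPt n (p.1, R⁻¹ • p.2))‖)
      atTop (𝓝 (Real.sqrt (Real.exp (-2 * lam * p.1)) * ‖χ p.2‖)) := by
    rw [tendsto_iff_norm_sub_tendsto_zero]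
    refine squeeze_zero' (Eventually.of_forall fun _ => norm_nonneg _) ?_
      (tendsto_zero_iff_norm_tendsto_zero.1 hrest)
    filter_upwards [eventually_gt_atTop 0] with R hR
    rw [← hlead R, Real.norm_eq_abs]
    refine (abs_norm_sub_norm_le _ _).trans (le_of_eq ?_)
    rw [beam_beamPt χ _ hR.ne', Finset.sum_range_succ']
    simp [profile]
  have h2 := hnorm.pow 2
  rwa [mul_pow, Real.sq_sqrt (Real.exp_pos _).le] at h2

/-- The normalised quasimode, as a function of `R = τ^{1/4}`. -/
noncomputable def quasi {n : ℕ} (χ : (Fin n → ℝ) → ℂ) (lam : ℝ) (N : ℕ) (R : ℝ)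
    (x : EuclideanSpace ℝ (Fin (n + 1))) : ℂ :=
  (Real.sqrt (R ^ n) : ℂ) * beam χ (freq lam R) R N x

/-- The integrand of `∫_B |v|² ψ` in beam coordinates; the amplitude `R^{n/2}` of the quasimode
cancels the Jacobian. -/
noncomputable def zoomed {n : ℕ} (χ : (Fin n → ℝ) → ℂ) (L lam : ℝ) (N : ℕ)
    (ψ : EuclideanSpace ℝ (Fin (n + 1)) → ℂ) (R : ℝ) (p : ℝ × (Fin n → ℝ)) : ℂ :=
  (beamBall n L).indicator (fun x => ((‖beam χ (freq lam R) R N x‖ ^ 2 : ℝ) : ℂ) * ψ x)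
    (beamPt n (p.1, R⁻¹ • p.2))

lemma integral_quasi {n : ℕ} (χ : (Fin n → ℝ) → ℂ) (L lam : ℝ) (N : ℕ)
    (ψ : EuclideanSpace ℝ (Fin (n + 1)) → ℂ) {R : ℝ} (hR : 0 < R) :
    ∫ x in beamBall n L, ((‖quasi χ lam N R x‖ ^ 2 : ℝ) : ℂ) * ψ x =
      ∫ p, zoomed χ L lam N ψ R p := by
  rw [← integral_indicator (measurableSet_beamBall n L), integral_zoom hR,
    ← integral_const_mul]
  congr 1
  funext p
  by_cases hB : beamPt n (p.1, R⁻¹ • p.2) ∈ beamBall n L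
  · rw [zoomed, Set.indicator_of_mem hB, Set.indicator_of_mem hB]
    have hRn : (R : ℂ) ^ n ≠ 0 := pow_ne_zero _ (by exact_mod_cast hR.ne')
    rw [quasi, norm_mul, mul_pow, Complex.norm_real, Real.norm_eq_abs, sq_abs,
      Real.sq_sqrt (by positivity)]
    push_cast
    field_simp
  · rw [zoomed, Set.indicator_of_notMem hB, Set.indicator_of_notMem hB, mul_zero]

/-- The dominating function for `zoomed`. -/
noncomputable def zoomMaj {n : ℕ} (χ : (Fin n → ℝ) → ℂ) (L lam : ℝ) (N : ℕ) (M : ℝ)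
    (p : ℝ × (Fin n → ℝ)) : ℝ :=
  (Set.Icc 0 L).indicator (fun _ => M) p.1 * beamMaj χ L lam N p.2 ^ 2

lemma integrable_zoomMaj {n : ℕ} {χ : (Fin n → ℝ) → ℂ} (hχ : ContDiff ℝ (⊤ : ℕ∞) χ)
    (hχc : HasCompactSupport χ) (L lam : ℝ) (N : ℕ) (M : ℝ) :
    Integrable (zoomMaj χ L lam N M) := by
  refine Integrable.mul_prod (f := (Set.Icc 0 L).indicator (fun _ => M)) ?_
    (integrable_beamMaj_sq hχ hχc L lam N)
  exact (integrable_indicator_iff measurableSet_Icc).2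
    (integrableOn_const (by simp))

lemma norm_zoomed_le {n : ℕ} (χ : (Fin n → ℝ) → ℂ) {L lam : ℝ} (hL : 0 < L) (N : ℕ)
    {ψ : EuclideanSpace ℝ (Fin (n + 1)) → ℂ} {M : ℝ} (hM : 0 ≤ M)
    (hψ : ∀ x ∈ beamBall n L, ‖ψ x‖ ≤ M)
    {R : ℝ} (hR : 1 ≤ R) (p : ℝ × (Fin n → ℝ)) :
    ‖zoomed χ L lam N ψ R p‖ ≤ zoomMaj χ L lam N M p := by
  by_cases hB : beamPt n (p.1, R⁻¹ • p.2) ∈ beamBall n L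
  · have hp : p.1 ∈ Set.Icc 0 L := by simpa using zero_coord_mem hB
    rw [zoomed, zoomMaj, Set.indicator_of_mem hB, Set.indicator_of_mem hp, norm_mul,
      Complex.norm_real, norm_pow, norm_norm, mul_comm]
    have := norm_beam_le (lam := lam) χ hL hR N hp
    exact mul_le_mul (hψ _ hB) (pow_le_pow_left₀ (norm_nonneg _) this 2) (by positivity) hM
  · rw [zoomed, Set.indicator_of_notMem hB, norm_zero]
    exact mul_nonneg (Set.indicator_nonneg (fun _ _ => hM) _) (sq_nonneg _)

lemma measurable_zoomed {n : ℕ} {χ : (Fin n → ℝ) → ℂ} (hχ : ContDiff ℝ (⊤ : ℕ∞) χ)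
    (L lam : ℝ) (N : ℕ) {ψ : EuclideanSpace ℝ (Fin (n + 1)) → ℂ}
    (hψ : ContinuousOn ψ (beamBall n L)) (R : ℝ) : Measurable (zoomed χ L lam N ψ R) := by
  classical
  have h1 : Measurable ((beamBall n L).indicator
      (fun x => ((‖beam χ (freq lam R) R N x‖ ^ 2 : ℝ) : ℂ) * ψ x)) := by
    rw [← Set.piecewise_eq_indicator]
    refine ContinuousOn.measurable_piecewise ?_ continuousOn_const (measurableSet_beamBall n L)
    refine ContinuousOn.mul (Continuous.continuousOn ?_) hψ
    exact Complex.continuous_ofReal.comp ((contDiff_beam hχ _ R N).continuous.norm.pow 2)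
  exact h1.comp ((beamPt n).measurable.comp
    (measurable_fst.prodMk (measurable_snd.const_smul R⁻¹)))

lemma tendsto_zoomed {n : ℕ} (χ : (Fin n → ℝ) → ℂ) {L : ℝ} (lam : ℝ) (hL : 0 < L) (N : ℕ)
    {ψ : EuclideanSpace ℝ (Fin (n + 1)) → ℂ} (hψ : ContinuousOn ψ (beamBall n L))
    {p : ℝ × (Fin n → ℝ)} (hp0 : p.1 ≠ 0) (hpL : p.1 ≠ L) :
    Tendsto (fun R => zoomed χ L lam N ψ R p) atTop
      (𝓝 ((Set.Ioc 0 L).indicator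
        (fun t => ((Real.exp (-2 * lam * t) : ℝ) : ℂ) *
          ψ (t • EuclideanSpace.single (0 : Fin (n + 1)) (1 : ℝ))) p.1 *
        ((‖χ p.2‖ ^ 2 : ℝ) : ℂ))) := by
  by_cases hp : p.1 ∈ Set.Ioo 0 L
  · have hpt : Tendsto (fun R : ℝ => beamPt n (p.1, R⁻¹ • p.2)) atTop (𝓝 (beamPt n (p.1, 0))) := by
      refine ((continuous_beamPt n).tendsto _).comp (tendsto_const_nhds.prodMk_nhds ?_)
      simpa using (tendsto_inv_atTop_zero (𝕜 := ℝ)).smul_const p.2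
    have hB := beamBall_mem_nhds (n := n) hp
    have hψt := ((hψ.continuousAt hB).tendsto).comp hpt
    have hn := (Complex.continuous_ofReal.tendsto _).comp
      (tendsto_norm_beam_sq χ lam hL N ⟨hp.1.le, hp.2.le⟩)
    have h := hn.mul hψt
    rw [Set.indicator_of_mem (Set.Ioo_subset_Ioc_self hp), ← beamPt_axis]
    have hval : ((Real.exp (-2 * lam * p.1) * ‖χ p.2‖ ^ 2 : ℝ) : ℂ) * ψ (beamPt n (p.1, 0)) =
        ((Real.exp (-2 * lam * p.1) : ℝ) : ℂ) * ψ (beamPt n (p.1, 0)) *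
          ((‖χ p.2‖ ^ 2 : ℝ) : ℂ) := by
      push_cast
      ring
    rw [← hval]
    refine h.congr' ?_
    filter_upwards [hpt.eventually_mem hB] with R hR
    rw [zoomed, Set.indicator_of_mem hR]
    rfl
  · have h1 : p.1 ∉ Set.Icc 0 L := fun h =>
      hp ⟨lt_of_le_of_ne h.1 hp0.symm, lt_of_le_of_ne h.2 hpL⟩
    rw [Set.indicator_of_notMem fun h => h1 (Set.Ioc_subset_Icc_self h), zero_mul]
    refine tendsto_const_nhds.congr fun R => ?_
    rw [zoomed, Set.indicator_of_notMem]
    intro h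
    exact h1 (by simpa using zero_coord_mem h)

lemma tendsto_integral_quasi {n : ℕ} {χ : (Fin n → ℝ) → ℂ} (hχ : ContDiff ℝ (⊤ : ℕ∞) χ)
    (hχc : HasCompactSupport χ) (hχ1 : ∫ y, ‖χ y‖ ^ 2 = 1) {L : ℝ} (lam : ℝ) (hL : 0 < L)
    (N : ℕ) {ψ : EuclideanSpace ℝ (Fin (n + 1)) → ℂ} (hψ : ContinuousOn ψ (beamBall n L)) :
    Tendsto (fun R => ∫ x in beamBall n L, ((‖quasi χ lam N R x‖ ^ 2 : ℝ) : ℂ) * ψ x) atTop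
      (𝓝 (∫ t in (0 : ℝ)..L, ((Real.exp (-2 * lam * t) : ℝ) : ℂ) *
          ψ (t • EuclideanSpace.single (0 : Fin (n + 1)) (1 : ℝ)))) := by
  obtain ⟨M, hM⟩ :=
    (isCompact_closedBall _ _ : IsCompact (beamBall n L)).exists_bound_of_continuousOn hψ
  have hM' : ∀ x ∈ beamBall n L, ‖ψ x‖ ≤ |M| := fun x hx => (hM x hx).trans (le_abs_self M)
  have hne : ∀ c : ℝ, ∀ᵐ p : ℝ × (Fin n → ℝ), p.1 ≠ c := fun c =>
    Measure.quasiMeasurePreserving_fst.ae (p := fun t : ℝ => t ≠ c) (Measure.ae_ne volume c)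
  have h := tendsto_integral_filter_of_dominated_convergence (μ := volume) (l := atTop)
    (F := fun R => zoomed χ L lam N ψ R) (zoomMaj χ L lam N |M|)
    (Eventually.of_forall fun R => (measurable_zoomed hχ L lam N hψ R).aestronglyMeasurable)
    (by
      filter_upwards [eventually_ge_atTop 1] with R hR
      exact Eventually.of_forall fun p => norm_zoomed_le χ hL N (abs_nonneg M) hM' hR p)
    (integrable_zoomMaj hχ hχc L lam N _)
    (by
      filter_upwards [hne 0, hne L] with p hp0 hpL
      exact tendsto_zoomed χ lam hL N hψ hp0 hpL)
  have hlim := integral_prod_mul (μ := (volume : Measure ℝ))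
    (ν := (volume : Measure (Fin n → ℝ)))
    ((Set.Ioc 0 L).indicator (fun t => ((Real.exp (-2 * lam * t) : ℝ) : ℂ) *
          ψ (t • EuclideanSpace.single (0 : Fin (n + 1)) (1 : ℝ))))
    (fun y => ((‖χ y‖ ^ 2 : ℝ) : ℂ))
  rw [integral_indicator measurableSet_Ioc, integral_complex_ofReal, hχ1, Complex.ofReal_one, mul_one,
    ← intervalIntegral.integral_of_le hL.le] at hlim
  rw [← hlim]
  refine h.congr' ?_
  filter_upwards [eventually_gt_atTop 0] with R hR
  exact (integral_quasi χ L lam N ψ hR).symm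

lemma integral_norm_quasi_sq_le {n : ℕ} {χ : (Fin n → ℝ) → ℂ} (hχ : ContDiff ℝ (⊤ : ℕ∞) χ)
    (hχc : HasCompactSupport χ) {L : ℝ} (lam : ℝ) (hL : 0 < L) (N : ℕ) {R : ℝ} (hR : 1 ≤ R) :
    ∫ x in beamBall n L, ‖quasi χ lam N R x‖ ^ 2 ≤ ∫ p, zoomMaj χ L lam N 1 p := by
  have h1 := integral_quasi χ L lam N (fun _ => 1) (by linarith : 0 < R)
  simp only [mul_one] at h1
  rw [integral_complex_ofReal] at h1
  have h2 := norm_integral_le_of_norm_le (integrable_zoomMaj hχ hχc L lam N 1)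
    (Eventually.of_forall fun p => norm_zoomed_le χ hL N (ψ := fun _ => 1) (lam := lam)
      zero_le_one (by simp) hR p)
  rw [← h1, Complex.norm_real] at h2
  exact (le_abs_self _).trans h2

/-- Pointwise residual bound on the ball; it decays in `R` once `2 N > n + 2`. -/
lemma exists_residual_bound {n : ℕ} {χ : (Fin n → ℝ) → ℂ} (hχ : ContDiff ℝ (⊤ : ℕ∞) χ)
    (hχc : HasCompactSupport χ) {L : ℝ} (lam : ℝ) (hL : 0 < L) (N : ℕ) :
    ∃ Q, 0 ≤ Q ∧ ∀ R : ℝ, 1 ≤ R → ∀ x ∈ beamBall n L,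
      ‖euclLap (quasi χ lam N R) x + freq lam R ^ 2 * quasi χ lam N R x‖ ≤
        Q * (R ^ (n + 2) / R ^ (2 * N)) := by
  obtain ⟨M, hM⟩ := (hasCompactSupport_profile hχc (N + 1)).exists_bound_of_continuous
    (contDiff_profile hχ (N + 1)).continuous
  have hM0 : 0 ≤ M := (norm_nonneg _).trans (hM 0)
  refine ⟨Real.exp (|lam| * L) * (2 * Real.exp (|lam| * L) ^ 2 * L) ^ N * M, by positivity, ?_⟩
  intro R hR x hx
  have hR0 : 0 < R := by linarith
  have hs : freq lam R ≠ 0 := by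
    intro h
    have h1 : (freq lam R).re = R ^ 4 := by simp [freq, -Complex.ofReal_pow]
    rw [h, Complex.zero_re] at h1
    exact (pow_pos hR0 4).ne h1
  have h1 : euclLap (quasi χ lam N R) x =
      (Real.sqrt (R ^ n) : ℂ) * euclLap (beam χ (freq lam R) R N) x := by
    simp only [euclLap, Finset.mul_sum]
    exact Finset.sum_congr rfl fun i _ => secondDeriv_const_mul _ (contDiff_beam hχ _ R N) _ _
  have h2 : euclLap (quasi χ lam N R) x + freq lam R ^ 2 * quasi χ lam N R x =
      (Real.sqrt (R ^ n) : ℂ) * (R : ℂ) ^ 2 * ((R : ℂ) ^ (2 * N) *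
        (beamAmp (freq lam R) N (x 0) * profile χ (N + 1) (R • tailL n x))) := by
    rw [h1, quasi]
    have := euclLap_beam hχ hs R N x
    rw [sepFun] at this
    linear_combination (Real.sqrt (R ^ n) : ℂ) * this
  have h3 := norm_term_le (lam := lam) hL hR N (zero_coord_mem hx)
    (profile χ (N + 1) (R • tailL n x))
  have h4 : Real.sqrt (R ^ n) ≤ R ^ n :=
    Real.sqrt_le_self_iff.2 (Or.inr (one_le_pow₀ hR))
  rw [h2, norm_mul, norm_mul, norm_pow, Complex.norm_real, Complex.norm_real,
    Real.norm_of_nonneg hR0.le, Real.norm_of_nonneg (Real.sqrt_nonneg _)]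
  calc _ ≤ R ^ n * R ^ 2 * (Real.exp (|lam| * L) * (2 * Real.exp (|lam| * L) ^ 2 * L) ^ N * M *
        ((R ^ 2)⁻¹) ^ N) := by
        refine mul_le_mul (by gcongr) (h3.trans ?_) (norm_nonneg _) (by positivity)
        gcongr
        exact hM _
    _ = _ := by
        rw [inv_pow, ← pow_mul, ← pow_add]
        ring

lemma exists_profile (n : ℕ) : ∃ χ : (Fin n → ℝ) → ℂ, ContDiff ℝ (⊤ : ℕ∞) χ ∧
    HasCompactSupport χ ∧ ∫ y, ‖χ y‖ ^ 2 = 1 := by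
  let f : ContDiffBump (0 : Fin n → ℝ) := ⟨1, 2, one_pos, one_lt_two⟩
  have hc : Continuous fun y => f y ^ 2 := f.continuous.pow 2
  have hpos : 0 < ∫ y, f y ^ 2 := by
    refine hc.integral_pos_of_hasCompactSupport_nonneg_nonzero ?_ (fun y => sq_nonneg _)
      (x := 0) ?_
    · simp only [sq]
      exact f.hasCompactSupport.mul_left (f := f)
    · exact pow_ne_zero 2 (f.pos_of_mem_ball (by simp [f])).ne'
  set c := ∫ y, f y ^ 2 with hcdef
  refine ⟨fun y => ((f y / Real.sqrt c : ℝ) : ℂ), ?_, ?_, ?_⟩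
  · exact Complex.ofRealCLM.contDiff.comp (f.contDiff.div_const _)
  · exact (f.hasCompactSupport.comp_left (g := fun u : ℝ => ((u / Real.sqrt c : ℝ) : ℂ)) (by simp))
  · have h : ∀ y, ‖((f y / Real.sqrt c : ℝ) : ℂ)‖ ^ 2 = f y ^ 2 / c := by
      intro y
      rw [Complex.norm_real, Real.norm_eq_abs, sq_abs, div_pow, Real.sq_sqrt hpos.le]
    simp only [h]
    rw [integral_div, ← hcdef, div_self hpos.ne']

/-! ### Quasimodes -/

/-- Gaussian beam quasimodes on a Euclidean ball (the Euclidean case of Theorem 1.4):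
for the diameter geodesic `γ(t) = t e₁` of the ball `B` of radius `L/2` centered at
`(L/2)e₁`, there is a family `(v_τ)` of smooth functions with
`‖(Δ + s²) v_τ‖_{L²(B)} = O(τ^{-K})`, `‖v_τ‖_{L²(B)} = O(1)` for `s = τ + iλ`, and
`∫_B |v_τ|² ψ → ∫₀^L e^{-2λt} ψ(t e₁) dt` for every continuous `ψ` on `B`. -/
theorem stmt_5 (m : ℕ) (hm : 2 ≤ m) (L : ℝ) (hL : 0 < L) (lam K : ℝ) (hK : 0 < K) :
    ∃ e1 : EuclideanSpace ℝ (Fin m), e1 = EuclideanSpace.single (⟨0, by omega⟩ : Fin m) 1 ∧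
    ∃ C > 0, ∃ v : ℝ → EuclideanSpace ℝ (Fin m) → ℂ,
      (∀ τ : ℝ, ContDiff ℝ (⊤ : ℕ∞) (v τ)) ∧
      (∀ τ : ℝ, 1 ≤ τ →
        Real.sqrt (∫ x in Metric.closedBall ((L / 2) • e1) (L / 2),
            ‖euclLap (v τ) x + ((τ : ℂ) + lam * Complex.I) ^ 2 * v τ x‖ ^ 2) ≤
          C * τ ^ (-K)) ∧
      (∀ τ : ℝ, 1 ≤ τ →
        Real.sqrt (∫ x in Metric.closedBall ((L / 2) • e1) (L / 2), ‖v τ x‖ ^ 2) ≤ C) ∧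
      (∀ ψ : EuclideanSpace ℝ (Fin m) → ℂ,
        ContinuousOn ψ (Metric.closedBall ((L / 2) • e1) (L / 2)) →
        Tendsto
          (fun τ : ℝ =>
            ∫ x in Metric.closedBall ((L / 2) • e1) (L / 2), (↑(‖v τ x‖ ^ 2) : ℂ) * ψ x)
          atTop
          (𝓝 (∫ t in (0 : ℝ)..L, (↑(Real.exp (-2 * lam * t)) : ℂ) * ψ (t • e1)))) := by
  obtain ⟨n, rfl⟩ : ∃ n, m = n + 1 := ⟨m - 1, by omega⟩
  refine ⟨EuclideanSpace.single (0 : Fin (n + 1)) 1, rfl, ?_⟩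
  obtain ⟨χ, hχ, hχc, hχ1⟩ := exists_profile n
  -- With this `N` the residual exponent satisfies `(n + 2) - 2 N ≤ -4 K`.
  set N : ℕ := n + 2 + ⌈2 * K⌉₊ with hN
  obtain ⟨Q, hQ0, hQ⟩ := exists_residual_bound hχ hχc lam hL N
  set V : ℝ := volume.real (beamBall n L) with hV
  have hV0 : 0 ≤ V := measureReal_nonneg
  set Z : ℝ := ∫ p, zoomMaj χ L lam N 1 p with hZ
  set C : ℝ := Q * Real.sqrt V + Real.sqrt Z + 1 with hC
  have hQV : 0 ≤ Q * Real.sqrt V := by positivity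
  have hroot : ∀ τ : ℝ, 1 ≤ τ → 1 ≤ τ ^ (1 / 4 : ℝ) ∧ (τ ^ (1 / 4 : ℝ)) ^ 4 = τ := by
    intro τ hτ
    refine ⟨Real.one_le_rpow hτ (by norm_num), ?_⟩
    rw [← Real.rpow_natCast, ← Real.rpow_mul (by linarith)]
    norm_num
  refine ⟨C, by positivity, fun τ => quasi χ lam N (τ ^ (1 / 4 : ℝ)), ?_, ?_, ?_, ?_⟩
  · exact fun τ => contDiff_const.mul (contDiff_beam hχ _ _ N)
  · intro τ hτ
    obtain ⟨hR, hR4⟩ := hroot τ hτ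
    set R := τ ^ (1 / 4 : ℝ) with hRdef
    have hR0 : 0 < R := by linarith
    have hfreq : (τ : ℂ) + lam * Complex.I = freq lam R := by rw [freq, hR4]
    have hdecay : R ^ (n + 2) / R ^ (2 * N) ≤ τ ^ (-K) := by
      rw [← hR4, ← Real.rpow_natCast R (n + 2), ← Real.rpow_natCast R (2 * N),
        ← Real.rpow_natCast R 4, ← Real.rpow_sub hR0, ← Real.rpow_mul hR0.le]
      apply Real.rpow_le_rpow_of_exponent_le hR
      have := Nat.le_ceil (2 * K)
      rw [hN]
      push_cast
      have hn : (0 : ℝ) ≤ n := Nat.cast_nonneg n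
      linarith
    have hτK : 0 ≤ τ ^ (-K) := Real.rpow_nonneg (by linarith) _
    have hpt : ∀ x ∈ beamBall n L,
        ‖‖euclLap (quasi χ lam N R) x + freq lam R ^ 2 * quasi χ lam N R x‖ ^ 2‖ ≤
          (Q * τ ^ (-K)) ^ 2 := by
      intro x hx
      rw [norm_pow, norm_norm]
      exact pow_le_pow_left₀ (norm_nonneg _)
        ((hQ R hR x hx).trans (mul_le_mul_of_nonneg_left hdecay hQ0)) 2
    have hint := norm_setIntegral_le_of_norm_le_const (μ := volume)
      (isCompact_closedBall _ _ : IsCompact (beamBall n L)).measure_lt_top hpt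
    rw [hfreq]
    refine (Real.sqrt_le_sqrt ((le_abs_self _).trans hint)).trans ?_
    rw [Real.sqrt_mul (sq_nonneg _), Real.sqrt_sq (by positivity)]
    have hle : Q * Real.sqrt V ≤ C := by
      have := Real.sqrt_nonneg Z
      linarith
    calc Q * τ ^ (-K) * Real.sqrt V = Q * Real.sqrt V * τ ^ (-K) := by ring
      _ ≤ C * τ ^ (-K) := mul_le_mul_of_nonneg_right hle hτK
  · intro τ hτ
    refine (Real.sqrt_le_sqrt
      (integral_norm_quasi_sq_le hχ hχc lam hL N (hroot τ hτ).1)).trans ?_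
    linarith
  · intro ψ hψ
    exact (tendsto_integral_quasi hχ hχc hχ1 lam hL N hψ).comp
      (tendsto_rpow_atTop (by norm_num))
end

section
/- Let $a > 0$ and $k \in \mathbb{R}$ with $k \ne a$ and $k \ne -a$, let $R > 0$ and let $t \in (-R, R)$. Then $\int_{-R}^{R} e^{i a |t - t'|}\, e^{i k t'}\, dt' = \frac{2 i a}{a^2 - k^2}\, e^{i k t} + \frac{e^{i(k + a)R - i a t}}{i (k + a)} - \frac{e^{-i(k - a)R + i a t}}{i (k - a)}$. -/
open Complex

/-! Splitting the interval at `t` removes the absolute value: on `[-R, t]` the integrand is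
`e^{iat} e^{i(k-a)t'}` and on `[t, R]` it is `e^{-iat} e^{i(k+a)t'}`. Both are integrated exactly,
as `k ≠ ±a`. The two contributions at the common endpoint `t` combine through
`1/(i(k-a)) - 1/(i(k+a)) = 2ia/(a²-k²)`. -/

/-- Explicit oscillatory integral identity:
`∫_{-R}^{R} e^{i a |t - t'|} e^{i k t'} dt'
  = 2ia/(a²-k²) e^{ikt} + e^{i(k+a)R - iat}/(i(k+a)) - e^{-i(k-a)R + iat}/(i(k-a))`
for `a > 0`, `k ≠ ±a`, `t ∈ (-R, R)`. -/
theorem stmt_11 (a k : ℝ) (ha : 0 < a) (hka : k ≠ a) (hka' : k ≠ -a)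
    (R : ℝ) (hR : 0 < R) (t : ℝ) (ht : t ∈ Set.Ioo (-R) R) :
    ∫ t' in (-R)..R, Complex.exp (Complex.I * a * |t - t'|) * Complex.exp (Complex.I * k * t') =
      2 * Complex.I * a / ((a : ℂ) ^ 2 - (k : ℂ) ^ 2) * Complex.exp (Complex.I * k * t) +
        Complex.exp (Complex.I * (k + a) * R - Complex.I * a * t) / (Complex.I * (k + a)) -
        Complex.exp (-Complex.I * (k - a) * R + Complex.I * a * t) / (Complex.I * (k - a)) := by
  have hm : (k : ℂ) - a ≠ 0 := sub_ne_zero.2 (by exact_mod_cast hka)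
  have hp : (k : ℂ) + a ≠ 0 := by
    intro h
    apply hka'
    have h' : k + a = 0 := by exact_mod_cast h
    linarith
  have hsq : (a : ℂ) ^ 2 - (k : ℂ) ^ 2 ≠ 0 := by
    have h : (a : ℂ) ^ 2 - (k : ℂ) ^ 2 = -((k - a) * (k + a)) := by ring
    rw [h]
    exact neg_ne_zero.2 (mul_ne_zero hm hp)
  have hcont : Continuous fun t' : ℝ =>
      Complex.exp (Complex.I * a * |t - t'|) * Complex.exp (Complex.I * k * t') := by
    fun_prop
  have hleft : ∫ t' in (-R)..t,
      Complex.exp (Complex.I * a * |t - t'|) * Complex.exp (Complex.I * k * t') =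
      Complex.exp (Complex.I * a * t) * ((Complex.exp (Complex.I * (k - a) * t) -
        Complex.exp (Complex.I * (k - a) * (-R : ℝ))) / (Complex.I * (k - a))) := by
    rw [← integral_exp_mul_complex (mul_ne_zero Complex.I_ne_zero hm),
      ← intervalIntegral.integral_const_mul]
    refine intervalIntegral.integral_congr fun x hx => ?_
    rw [Set.uIcc_of_le ht.1.le] at hx
    simp only [abs_of_nonneg (sub_nonneg.2 hx.2), ← Complex.exp_add]
    congr 1
    push_cast
    ring
  have hright : ∫ t' in t..R,
      Complex.exp (Complex.I * a * |t - t'|) * Complex.exp (Complex.I * k * t') =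
      Complex.exp (-(Complex.I * a * t)) * ((Complex.exp (Complex.I * (k + a) * R) -
        Complex.exp (Complex.I * (k + a) * t)) / (Complex.I * (k + a))) := by
    rw [← integral_exp_mul_complex (mul_ne_zero Complex.I_ne_zero hp),
      ← intervalIntegral.integral_const_mul]
    refine intervalIntegral.integral_congr fun x hx => ?_
    rw [Set.uIcc_of_le ht.2.le] at hx
    simp only [abs_of_nonpos (sub_nonpos.2 hx.1), ← Complex.exp_add]
    congr 1
    push_cast
    ring
  rw [← intervalIntegral.integral_add_adjacent_intervals (hcont.intervalIntegrable (-R) t)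
    (hcont.intervalIntegrable t R), hleft, hright, mul_div_assoc', mul_div_assoc',
    mul_sub (Complex.exp _), mul_sub (Complex.exp _)]
  simp only [← Complex.exp_add]
  have e1 : Complex.I * a * t + Complex.I * (k - a) * t = Complex.I * k * t := by ring
  have e2 : Complex.I * a * t + Complex.I * (k - a) * (-R : ℝ) =
      -Complex.I * (k - a) * R + Complex.I * a * t := by
    push_cast
    ring
  have e3 : -(Complex.I * a * t) + Complex.I * (k + a) * R =
      Complex.I * (k + a) * R - Complex.I * a * t := by ring
  have e4 : -(Complex.I * a * t) + Complex.I * (k + a) * t = Complex.I * k * t := by ring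
  rw [e1, e2, e3, e4]
  have hcoef : 2 * Complex.I * a / ((a : ℂ) ^ 2 - (k : ℂ) ^ 2) =
      1 / (Complex.I * (k - a)) - 1 / (Complex.I * (k + a)) := by
    have hI := Complex.I_ne_zero
    rw [div_sub_div _ _ (mul_ne_zero hI hm) (mul_ne_zero hI hp),
      div_eq_div_iff hsq (mul_ne_zero (mul_ne_zero hI hm) (mul_ne_zero hI hp))]
    linear_combination (2 * Complex.I * a * (k ^ 2 - a ^ 2)) * Complex.I_sq
  rw [hcoef]
  ring
end

section
/- Let $a > 0$ and $k \in \mathbb{R}$ with $k \ne a$ and $k \ne -a$, and let $t \in \mathbb{R}$. Then $\lim_{R \to \infty} \frac{1}{R - 1} \int_1^R \Big( \int_{-R'}^{R'} e^{i a |t - t'|}\, e^{i k t'}\, dt' \Big)\, dR' = \frac{2 i a}{a^2 - k^2}\, e^{i k t}$. -/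
/-!
Splitting the inner integral at `t' = t` and integrating the exponentials shows that, once
`R' ≥ |t|`, it equals a constant plus multiples of `e^{-i(k-a)R'}` and `e^{i(k+a)R'}`, where the
constant is the claimed limit (`inner_eq`). Since `k ± a ≠ 0`, both oscillating terms have bounded
primitives, so the integral of the inner function over `[1, R]` differs from `(R - 1)` times the
constant by a bounded amount, and division by `R - 1` leaves the constant (`tendsto_cesaro`).
-/

open Filter Topology

/-- Cesàro averaging removes nonconstant purely oscillating exponentials, and is insensitive to the
values of the function on a bounded interval. -/
lemma tendsto_cesaro {f : ℝ → ℂ} (hf : Continuous f) {C A B p q : ℂ} {T : ℝ}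
    (hp : p ≠ 0) (hq : q ≠ 0) (hpr : p.re = 0) (hqr : q.re = 0)
    (h : ∀ x, T ≤ x → f x = C + A * Complex.exp (p * x) + B * Complex.exp (q * x)) :
    Tendsto (fun R : ℝ => ((R : ℂ) - 1)⁻¹ * ∫ x in (1:ℝ)..R, f x) atTop (𝓝 C) := by
  set K : ℂ := (∫ x in (1:ℝ)..T, f x) - C * (T - 1) - A * (Complex.exp (p * T) / p)
    - B * (Complex.exp (q * T) / q) with hK
  have key : ∀ R, T ≤ R → ∫ x in (1:ℝ)..R, f x = C * (R - 1) +
      (K + A * (Complex.exp (p * R) / p) + B * (Complex.exp (q * R) / q)) := by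
    intro R hR
    have h1 : ∫ x in T..R, f x =
        ∫ x in T..R, (C + A * Complex.exp (p * x) + B * Complex.exp (q * x)) := by
      apply intervalIntegral.integral_congr
      intro x hx
      rw [Set.uIcc_of_le hR] at hx
      exact h x hx.1
    rw [← intervalIntegral.integral_add_adjacent_intervals (hf.intervalIntegrable 1 T)
      (hf.intervalIntegrable T R), h1, intervalIntegral.integral_add,
      intervalIntegral.integral_add, intervalIntegral.integral_const_mul,
      intervalIntegral.integral_const_mul, integral_exp_mul_complex hp,
      integral_exp_mul_complex hq, intervalIntegral.integral_const, hK]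
    · simp only [Complex.real_smul]
      push_cast
      ring
    all_goals exact Continuous.intervalIntegrable (by fun_prop) _ _
  have hnorm : ∀ (c : ℂ) (x : ℝ), c.re = 0 → ‖Complex.exp (c * x)‖ = 1 := by
    intro c x hc
    simp [Complex.norm_exp, hc]
  have hzero : Tendsto (fun R : ℝ => ((R : ℂ) - 1)⁻¹ *
      (K + A * (Complex.exp (p * R) / p) + B * (Complex.exp (q * R) / q))) atTop (𝓝 0) := by
    have hlim : Tendsto (fun R : ℝ => (R - 1)⁻¹ * (‖K‖ + ‖A‖ * (1 / ‖p‖) + ‖B‖ * (1 / ‖q‖)))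
        atTop (𝓝 0) := by
      have := (tendsto_inv_atTop_zero.comp (tendsto_atTop_add_const_right atTop (-1 : ℝ)
        tendsto_id)).mul_const (‖K‖ + ‖A‖ * (1 / ‖p‖) + ‖B‖ * (1 / ‖q‖))
      simpa [Function.comp_def, sub_eq_add_neg] using this
    refine squeeze_zero_norm' ?_ hlim
    filter_upwards [eventually_gt_atTop (1 : ℝ)] with R hR
    have hR1 : ‖((R : ℂ) - 1)⁻¹‖ = (R - 1)⁻¹ := by
      rw [norm_inv, ← Complex.ofReal_one, ← Complex.ofReal_sub, Complex.norm_real,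
        Real.norm_of_nonneg (by linarith)]
    rw [norm_mul, hR1]
    refine mul_le_mul_of_nonneg_left ?_ (inv_nonneg.2 (by linarith))
    refine (norm_add₃_le).trans ?_
    rw [norm_mul, norm_mul, norm_div, norm_div, hnorm p R hpr, hnorm q R hqr]
  have hfin := hzero.const_add C
  rw [add_zero] at hfin
  refine hfin.congr' ?_
  filter_upwards [eventually_gt_atTop (1 : ℝ), eventually_ge_atTop T] with R hR hRT
  have hne : (R : ℂ) - 1 ≠ 0 := by
    rw [sub_ne_zero]
    exact_mod_cast hR.ne'
  rw [key R hRT]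
  field_simp

/-- Closed form of the inner integral; `|t| ≤ R` is what makes the splitting point `t` lie in
`[-R, R]`, so that `|t - s|` has a fixed sign on each piece. -/
lemma inner_eq (a k t : ℝ) (hka : k ≠ a) (hka' : k ≠ -a) (R : ℝ) (hR : |t| ≤ R) :
    (∫ s in (-R)..R, Complex.exp (Complex.I * a * |t - s|) * Complex.exp (Complex.I * k * s)) =
      2 * Complex.I * a / ((a : ℂ) ^ 2 - (k : ℂ) ^ 2) * Complex.exp (Complex.I * k * t)
      + -(Complex.exp (Complex.I * a * t) / (Complex.I * (k - a)))
        * Complex.exp (-(Complex.I * (k - a)) * R)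
      + Complex.exp (-(Complex.I * a * t)) / (Complex.I * (k + a))
        * Complex.exp (Complex.I * (k + a) * R) := by
  have h1 : (k : ℂ) - a ≠ 0 := by
    rw [sub_ne_zero]; exact_mod_cast hka
  have h2 : (k : ℂ) + a ≠ 0 := by
    intro h
    apply hka'
    have : k + a = 0 := by exact_mod_cast h
    linarith
  have hm : Complex.I * ((k : ℂ) - a) ≠ 0 := mul_ne_zero Complex.I_ne_zero h1
  have hp : Complex.I * ((k : ℂ) + a) ≠ 0 := mul_ne_zero Complex.I_ne_zero h2
  obtain ⟨hl, hr⟩ := abs_le.1 hR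
  have hc : Continuous fun s : ℝ =>
      Complex.exp (Complex.I * a * |t - s|) * Complex.exp (Complex.I * k * s) := by fun_prop
  have e1 : (∫ s in (-R)..t,
      Complex.exp (Complex.I * a * |t - s|) * Complex.exp (Complex.I * k * s)) =
      ∫ s in (-R)..t, Complex.exp (Complex.I * a * t) *
        Complex.exp (Complex.I * (k - a) * s) := by
    apply intervalIntegral.integral_congr
    intro s hs
    rw [Set.uIcc_of_le hl] at hs
    simp only
    rw [abs_of_nonneg (by linarith [hs.2]), ← Complex.exp_add, ← Complex.exp_add]
    congr 1
    push_cast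
    ring
  have e2 : (∫ s in t..R,
      Complex.exp (Complex.I * a * |t - s|) * Complex.exp (Complex.I * k * s)) =
      ∫ s in t..R, Complex.exp (-(Complex.I * a * t)) *
        Complex.exp (Complex.I * (k + a) * s) := by
    apply intervalIntegral.integral_congr
    intro s hs
    rw [Set.uIcc_of_le hr] at hs
    simp only
    rw [abs_of_nonpos (by linarith [hs.1]), ← Complex.exp_add, ← Complex.exp_add]
    congr 1
    push_cast
    ring
  rw [← intervalIntegral.integral_add_adjacent_intervals (hc.intervalIntegrable (-R) t)
    (hc.intervalIntegrable t R), e1, e2, intervalIntegral.integral_const_mul,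
    intervalIntegral.integral_const_mul, integral_exp_mul_complex hm,
    integral_exp_mul_complex hp]
  -- At the splitting point both exponentials combine to `e^{ikt}`.
  have g1 : Complex.exp (Complex.I * a * t) * Complex.exp (Complex.I * (k - a) * t) =
      Complex.exp (Complex.I * k * t) := by
    rw [← Complex.exp_add]; congr 1; ring
  have g2 : Complex.exp (-(Complex.I * a * t)) * Complex.exp (Complex.I * (k + a) * t) =
      Complex.exp (Complex.I * k * t) := by
    rw [← Complex.exp_add]; congr 1; ring
  have g3 : Complex.I * ((k : ℂ) - a) * ((-R : ℝ) : ℂ) = -(Complex.I * (k - a)) * R := by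
    push_cast; ring
  have g4 : 2 * Complex.I * a / ((a : ℂ) ^ 2 - (k : ℂ) ^ 2) =
      1 / (Complex.I * (k - a)) - 1 / (Complex.I * (k + a)) := by
    have h3 : (a : ℂ) ^ 2 - (k : ℂ) ^ 2 ≠ 0 := by
      have : (a : ℂ) ^ 2 - (k : ℂ) ^ 2 = -((k - a) * (k + a)) := by ring
      rw [this]
      exact neg_ne_zero.2 (mul_ne_zero h1 h2)
    have hI := Complex.I_ne_zero
    rw [div_sub_div _ _ hm hp, div_eq_div_iff h3 (mul_ne_zero hm hp)]
    linear_combination (2 * Complex.I * a * (k ^ 2 - a ^ 2)) * Complex.I_sq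
  rw [g3, g4]
  linear_combination (1 / (Complex.I * ((k : ℂ) - a))) * g1 - (1 / (Complex.I * ((k : ℂ) + a))) * g2

/-- Cesàro-averaged limit of the oscillatory integrals: for `a > 0`, `k ≠ ±a`,
`lim_{R→∞} (R-1)⁻¹ ∫_1^R ( ∫_{-R'}^{R'} e^{ia|t-t'|} e^{ikt'} dt' ) dR'
 = 2ia/(a²-k²) e^{ikt}`. -/
theorem stmt_12 (a k : ℝ) (ha : 0 < a) (hka : k ≠ a) (hka' : k ≠ -a) (t : ℝ) :
    Tendsto (fun R : ℝ =>
        ((R : ℂ) - 1)⁻¹ *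
          ∫ R' in (1:ℝ)..R, ∫ t' in (-R')..R',
            Complex.exp (Complex.I * a * |t - t'|) * Complex.exp (Complex.I * k * t'))
      atTop
      (𝓝 (2 * Complex.I * a / ((a : ℂ) ^ 2 - (k : ℂ) ^ 2) * Complex.exp (Complex.I * k * t))) := by
  have h1 : (k : ℂ) - a ≠ 0 := by
    rw [sub_ne_zero]; exact_mod_cast hka
  have h2 : (k : ℂ) + a ≠ 0 := by
    intro h
    apply hka'
    have : k + a = 0 := by exact_mod_cast h
    linarith
  refine tendsto_cesaro (T := |t|) ?_ (neg_ne_zero.2 (mul_ne_zero Complex.I_ne_zero h1))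
    (mul_ne_zero Complex.I_ne_zero h2) (by simp) (by simp)
    (fun R hR => inner_eq a k t hka hka' R hR)
  have hc : Continuous fun s : ℝ =>
      Complex.exp (Complex.I * a * |t - s|) * Complex.exp (Complex.I * k * s) := by fun_prop
  have hprim : Continuous fun R : ℝ => ∫ s in (0:ℝ)..R,
      Complex.exp (Complex.I * a * |t - s|) * Complex.exp (Complex.I * k * s) :=
    intervalIntegral.continuous_primitive (fun u v => hc.intervalIntegrable u v) 0
  refine (hprim.sub (hprim.comp continuous_neg)).congr fun R => ?_
  exact intervalIntegral.integral_interval_sub_left (hc.intervalIntegrable _ _)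
    (hc.intervalIntegrable _ _)
end

section
/- Let $d \ge 1$, let $\Omega_0 \subset \mathbb{R}^d$ be a bounded open set, let $q_0 : \Omega_0 \to \mathbb{R}$ be bounded and measurable with $\|q_0\|_\infty = \sup |q_0|$, and let $\lambda_1 \in \mathbb{R}$ be such that $\int_{\Omega_0} (|\nabla v|^2 + q_0 |v|^2)\, dx \ge \lambda_1 \int_{\Omega_0} |v|^2\, dx$ for all $v \in C_c^\infty(\Omega_0; \mathbb{C})$. Then for every $\lambda \in \mathbb{R}$, every $\varepsilon \in (0,1)$, and every $u \in C_c^\infty(\mathbb{R} \times \Omega_0; \mathbb{C})$ one has $\int_{\mathbb{R} \times \Omega_0} \big(|\nabla u|^2 + (q_0(x) - \lambda)|u|^2\big)\, dt\, dx \ge \varepsilon \int_{\mathbb{R} \times \Omega_0} |\nabla u|^2\, dt\, dx + \big(\lambda_1(1 - \varepsilon) - \varepsilon \|q_0\|_\infty - \lambda\big) \int_{\mathbb{R} \times \Omega_0} |u|^2\, dt\, dx$. In particular, if $\lambda < \lambda_1$, then there exist $\varepsilon \in (0,1)$ and $c > 0$ such that the left-hand side is at least $c \int_{\mathbb{R}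 \times \Omega_0} (|\nabla u|^2 + |u|^2)\, dt\, dx$ for all such $u$. -/
/-!
For fixed `t`, the slice `u(t, ·)` is an admissible test function on `Ω₀`, and its gradient is the
transversal part of `∇u(t, ·)`. Integrating the hypothesis on `lam₁` over `t` (Fubini) gives
`lam₁ ∫|u|² ≤ ∫ (|∇ₓu|² + q₀|u|²)`, hence also `lam₁ ∫|u|² ≤ ∫ (|∇u|² + q₀|u|²)` since `|∂ₜu|² ≥ 0`
(`transversal_bound`). The first claim is `1 - ε` times this bound plus `ε` times the trivial bound
`-Q ∫|u|² ≤ ∫ q₀|u|²`. For the second, `ε` is taken so small that the coefficient of `∫|u|²` is at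
least `(lam₁ - lam) / 2`.
-/

open MeasureTheory

/-- Squared length of the full gradient of `u : ℝ × ℝᵈ → ℂ` at `p`,
`|∂_t u|² + ∑ᵢ |∂ᵢ u|²`. -/
noncomputable def gradSq {d : ℕ} (u : ℝ × EuclideanSpace ℝ (Fin d) → ℂ)
    (p : ℝ × EuclideanSpace ℝ (Fin d)) : ℝ :=
  ‖fderiv ℝ u p (1, 0)‖ ^ 2 + ∑ i, ‖fderiv ℝ u p (0, EuclideanSpace.single i 1)‖ ^ 2

/-- Squared length of the gradient of `v : ℝᵈ → ℂ` at `x`, `∑ᵢ |∂ᵢ v|²`. -/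
noncomputable def gradSq₀ {d : ℕ} (v : EuclideanSpace ℝ (Fin d) → ℂ)
    (x : EuclideanSpace ℝ (Fin d)) : ℝ :=
  ∑ i, ‖fderiv ℝ v x (EuclideanSpace.single i 1)‖ ^ 2

theorem integrable_normSq_of_hasCompactSupport {d : ℕ}
    {f : ℝ × EuclideanSpace ℝ (Fin d) → ℂ} (hf : Continuous f) (hc : HasCompactSupport f) :
    Integrable (fun p => ‖f p‖ ^ 2) := by
  have hcont : Continuous fun p => ‖f p‖ ^ 2 := by fun_prop
  have hsupp : HasCompactSupport fun p => ‖f p‖ ^ 2 :=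
    hc.mono fun p hp hfp => hp (by simp [hfp])
  exact hcont.integrable_of_hasCompactSupport hsupp

theorem integrable_normSq_fderiv_apply {d : ℕ} {u : ℝ × EuclideanSpace ℝ (Fin d) → ℂ}
    (hu : ContDiff ℝ (⊤ : ℕ∞) u) (hc : HasCompactSupport u)
    (w : ℝ × EuclideanSpace ℝ (Fin d)) :
    Integrable (fun p => ‖fderiv ℝ u p w‖ ^ 2) :=
  integrable_normSq_of_hasCompactSupport
    ((hu.continuous_fderiv (by simp)).clm_apply continuous_const) (hc.fderiv_apply ℝ w)

theorem integrable_gradSq {d : ℕ} {u : ℝ × EuclideanSpace ℝ (Fin d) → ℂ}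
    (hu : ContDiff ℝ (⊤ : ℕ∞) u) (hc : HasCompactSupport u) : Integrable (gradSq u) :=
  (integrable_normSq_fderiv_apply hu hc _).add
    (integrable_finsetSum _ fun _ _ => integrable_normSq_fderiv_apply hu hc _)

theorem integrableOn_potential_mul_normSq {d : ℕ} {Ω₀ : Set (EuclideanSpace ℝ (Fin d))}
    (hΩo : IsOpen Ω₀) {q₀ : EuclideanSpace ℝ (Fin d) → ℝ} (hqm : Measurable q₀)
    {Q : ℝ} (hQ : ∀ x ∈ Ω₀, |q₀ x| ≤ Q) {u : ℝ × EuclideanSpace ℝ (Fin d) → ℂ}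
    (hu : ContDiff ℝ (⊤ : ℕ∞) u) (hc : HasCompactSupport u) :
    IntegrableOn (fun p => q₀ p.2 * ‖u p‖ ^ 2) (Set.univ ×ˢ Ω₀) := by
  refine (integrable_normSq_of_hasCompactSupport hu.continuous hc).integrableOn.bdd_mul (c := Q)
    (hqm.comp measurable_snd).aestronglyMeasurable ?_
  filter_upwards [ae_restrict_mem (MeasurableSet.univ.prod hΩo.measurableSet)] with p hp
  exact hQ _ hp.2

theorem gradSq₀_slice {d : ℕ} {u : ℝ × EuclideanSpace ℝ (Fin d) → ℂ}
    (hu : ContDiff ℝ (⊤ : ℕ∞) u) (t : ℝ) (x : EuclideanSpace ℝ (Fin d)) :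
    gradSq₀ (fun y => u (t, y)) x =
      ∑ i, ‖fderiv ℝ u (t, x) (0, EuclideanSpace.single i 1)‖ ^ 2 := by
  have h : HasFDerivAt (fun y => u (t, y))
      ((fderiv ℝ u (t, x)).comp (ContinuousLinearMap.inr ℝ ℝ (EuclideanSpace ℝ (Fin d)))) x :=
    ((hu.differentiable (by simp)) (t, x)).hasFDerivAt.comp x (hasFDerivAt_prodMk_right t x)
  simp [gradSq₀, h.fderiv]

/-- The lower bound `lam₁` for the transversal form passes to the cylinder: it holds on every slice
`u(t, ·)`, hence after integration in `t`, and `|∂ₜu|²` only helps. -/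
theorem transversal_bound {d : ℕ} {Ω₀ : Set (EuclideanSpace ℝ (Fin d))} (hΩo : IsOpen Ω₀)
    {q₀ : EuclideanSpace ℝ (Fin d) → ℝ} (hqm : Measurable q₀)
    {Q : ℝ} (hQ : ∀ x ∈ Ω₀, |q₀ x| ≤ Q) {lam₁ : ℝ}
    (hlam₁ : ∀ v : EuclideanSpace ℝ (Fin d) → ℂ, ContDiff ℝ (⊤ : ℕ∞) v → HasCompactSupport v →
      tsupport v ⊆ Ω₀ →
      lam₁ * ∫ x in Ω₀, ‖v x‖ ^ 2 ≤ ∫ x in Ω₀, (gradSq₀ v x + q₀ x * ‖v x‖ ^ 2))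
    {u : ℝ × EuclideanSpace ℝ (Fin d) → ℂ}
    (hu : ContDiff ℝ (⊤ : ℕ∞) u) (hc : HasCompactSupport u)
    (hs : tsupport u ⊆ Set.univ ×ˢ Ω₀) :
    lam₁ * ∫ p in Set.univ ×ˢ Ω₀, ‖u p‖ ^ 2 ≤
      ∫ p in Set.univ ×ˢ Ω₀, (gradSq u p + q₀ p.2 * ‖u p‖ ^ 2) := by
  have hU := (integrable_normSq_of_hasCompactSupport hu.continuous hc).integrableOn
    (s := Set.univ ×ˢ Ω₀)
  have hq := integrableOn_potential_mul_normSq hΩo hqm hQ hu hc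
  have hH : IntegrableOn
      (fun p => ∑ i, ‖fderiv ℝ u p (0, EuclideanSpace.single i 1)‖ ^ 2) (Set.univ ×ˢ Ω₀) :=
    (integrable_finsetSum _ fun _ _ => integrable_normSq_fderiv_apply hu hc _).integrableOn
  have hG := (integrable_gradSq hu hc).integrableOn (s := Set.univ ×ˢ Ω₀)
  have hHq : IntegrableOn (fun p => ∑ i, ‖fderiv ℝ u p (0, EuclideanSpace.single i 1)‖ ^ 2 +
      q₀ p.2 * ‖u p‖ ^ 2) (Set.univ ×ˢ Ω₀) := hH.add hq
  have hmono : ∫ p in Set.univ ×ˢ Ω₀,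
      (∑ i, ‖fderiv ℝ u p (0, EuclideanSpace.single i 1)‖ ^ 2 + q₀ p.2 * ‖u p‖ ^ 2) ≤
      ∫ p in Set.univ ×ˢ Ω₀, (gradSq u p + q₀ p.2 * ‖u p‖ ^ 2) := by
    refine integral_mono hHq (hG.add hq) fun p => ?_
    simp only [gradSq]
    nlinarith [sq_nonneg ‖fderiv ℝ u p (1, 0)‖]
  refine le_trans ?_ hmono
  have hprod : (volume : Measure (ℝ × EuclideanSpace ℝ (Fin d))).restrict (Set.univ ×ˢ Ω₀) =
      (volume : Measure ℝ).prod (volume.restrict Ω₀) := by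
    rw [Measure.volume_eq_prod, ← Measure.prod_restrict, Measure.restrict_univ]
  rw [IntegrableOn, hprod] at hU hHq
  rw [hprod, integral_prod _ hU, integral_prod _ hHq, ← integral_const_mul]
  refine integral_mono (hU.integral_prod_left.const_mul _) hHq.integral_prod_left fun t => ?_
  have hsupp := tsupport_comp_subset_preimage u
    (f := fun y : EuclideanSpace ℝ (Fin d) => (t, y)) (by fun_prop)
  have key := hlam₁ (fun y => u (t, y)) (hu.comp (contDiff_prodMk_right t))
    (hc.comp_isClosedEmbedding
      (Function.LeftInverse.isClosedEmbedding (f := Prod.snd) (fun _ => rfl)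
        continuous_snd (by fun_prop)))
    fun y hy => (hs (hsupp hy)).2
  simpa only [gradSq₀_slice hu] using key

/-- The quadratic form splits into its gradient, potential and mass parts. -/
theorem integral_form_eq {d : ℕ} {Ω₀ : Set (EuclideanSpace ℝ (Fin d))} (hΩo : IsOpen Ω₀)
    {q₀ : EuclideanSpace ℝ (Fin d) → ℝ} (hqm : Measurable q₀)
    {Q : ℝ} (hQ : ∀ x ∈ Ω₀, |q₀ x| ≤ Q) {u : ℝ × EuclideanSpace ℝ (Fin d) → ℂ}
    (hu : ContDiff ℝ (⊤ : ℕ∞) u) (hc : HasCompactSupport u) (lam : ℝ) :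
    ∫ p in Set.univ ×ˢ Ω₀, (gradSq u p + (q₀ p.2 - lam) * ‖u p‖ ^ 2) =
      (∫ p in Set.univ ×ˢ Ω₀, gradSq u p) + (∫ p in Set.univ ×ˢ Ω₀, q₀ p.2 * ‖u p‖ ^ 2) -
        lam * ∫ p in Set.univ ×ˢ Ω₀, ‖u p‖ ^ 2 := by
  have hU := (integrable_normSq_of_hasCompactSupport hu.continuous hc).integrableOn
    (s := Set.univ ×ˢ Ω₀)
  have hq := integrableOn_potential_mul_normSq hΩo hqm hQ hu hc
  have hG := (integrable_gradSq hu hc).integrableOn (s := Set.univ ×ˢ Ω₀)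
  have hGq : IntegrableOn (fun p => gradSq u p + q₀ p.2 * ‖u p‖ ^ 2) (Set.univ ×ˢ Ω₀) := hG.add hq
  rw [← integral_const_mul, ← integral_add hG hq, ← integral_sub hGq (hU.const_mul lam)]
  congr 1 with p
  ring

theorem neg_mul_integral_le_potential {d : ℕ} {Ω₀ : Set (EuclideanSpace ℝ (Fin d))}
    (hΩo : IsOpen Ω₀) {q₀ : EuclideanSpace ℝ (Fin d) → ℝ} (hqm : Measurable q₀)
    {Q : ℝ} (hQ : ∀ x ∈ Ω₀, |q₀ x| ≤ Q) {u : ℝ × EuclideanSpace ℝ (Fin d) → ℂ}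
    (hu : ContDiff ℝ (⊤ : ℕ∞) u) (hc : HasCompactSupport u) :
    -Q * ∫ p in Set.univ ×ˢ Ω₀, ‖u p‖ ^ 2 ≤ ∫ p in Set.univ ×ˢ Ω₀, q₀ p.2 * ‖u p‖ ^ 2 := by
  rw [← integral_const_mul]
  refine setIntegral_mono_on
    ((integrable_normSq_of_hasCompactSupport hu.continuous hc).integrableOn.const_mul _)
    (integrableOn_potential_mul_normSq hΩo hqm hQ hu hc)
    (MeasurableSet.univ.prod hΩo.measurableSet) fun p hp => ?_
  exact mul_le_mul_of_nonneg_right (abs_le.1 (hQ _ hp.2)).1 (by positivity)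

/-- Coercivity of the quadratic form on the infinite cylinder (the first Lemma of
Section 5, Euclidean transversal domain): if the transversal form satisfies
`∫(|∇v|² + q₀|v|²) ≥ λ₁∫|v|²` for `v ∈ C_c^∞(Ω₀)`, then for all `λ, ε ∈ (0,1)` and
`u ∈ C_c^∞(ℝ × Ω₀)`,
`∫(|∇u|² + (q₀-λ)|u|²) ≥ ε∫|∇u|² + (λ₁(1-ε) - ε‖q₀‖_∞ - λ)∫|u|²`;
in particular for `λ < λ₁` the form is coercive. -/
theorem stmt_19 (d : ℕ) (hd : 1 ≤ d)
    (Ω₀ : Set (EuclideanSpace ℝ (Fin d))) (hΩo : IsOpen Ω₀) (hΩb : Bornology.IsBounded Ω₀)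
    (q₀ : EuclideanSpace ℝ (Fin d) → ℝ) (hqm : Measurable q₀)
    (Q : ℝ) (hQ : ∀ x ∈ Ω₀, |q₀ x| ≤ Q)
    (lam₁ : ℝ)
    (hlam₁ : ∀ v : EuclideanSpace ℝ (Fin d) → ℂ, ContDiff ℝ (⊤ : ℕ∞) v → HasCompactSupport v →
      tsupport v ⊆ Ω₀ →
      lam₁ * ∫ x in Ω₀, ‖v x‖ ^ 2 ≤ ∫ x in Ω₀, (gradSq₀ v x + q₀ x * ‖v x‖ ^ 2)) :
    (∀ lam ε : ℝ, 0 < ε → ε < 1 →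
      ∀ u : ℝ × EuclideanSpace ℝ (Fin d) → ℂ, ContDiff ℝ (⊤ : ℕ∞) u → HasCompactSupport u →
        tsupport u ⊆ Set.univ ×ˢ Ω₀ →
        ε * (∫ p in Set.univ ×ˢ Ω₀, gradSq u p) +
            (lam₁ * (1 - ε) - ε * Q - lam) * ∫ p in Set.univ ×ˢ Ω₀, ‖u p‖ ^ 2 ≤
          ∫ p in Set.univ ×ˢ Ω₀, (gradSq u p + (q₀ p.2 - lam) * ‖u p‖ ^ 2)) ∧
    (∀ lam : ℝ, lam < lam₁ → ∃ ε : ℝ, 0 < ε ∧ ε < 1 ∧ ∃ c > 0,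
      ∀ u : ℝ × EuclideanSpace ℝ (Fin d) → ℂ, ContDiff ℝ (⊤ : ℕ∞) u → HasCompactSupport u →
        tsupport u ⊆ Set.univ ×ˢ Ω₀ →
        c * ∫ p in Set.univ ×ˢ Ω₀, (gradSq u p + ‖u p‖ ^ 2) ≤
          ∫ p in Set.univ ×ˢ Ω₀, (gradSq u p + (q₀ p.2 - lam) * ‖u p‖ ^ 2)) := by
  have main : ∀ lam ε : ℝ, 0 < ε → ε < 1 →
      ∀ u : ℝ × EuclideanSpace ℝ (Fin d) → ℂ, ContDiff ℝ (⊤ : ℕ∞) u → HasCompactSupport u →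
        tsupport u ⊆ Set.univ ×ˢ Ω₀ →
        ε * (∫ p in Set.univ ×ˢ Ω₀, gradSq u p) +
            (lam₁ * (1 - ε) - ε * Q - lam) * ∫ p in Set.univ ×ˢ Ω₀, ‖u p‖ ^ 2 ≤
          ∫ p in Set.univ ×ˢ Ω₀, (gradSq u p + (q₀ p.2 - lam) * ‖u p‖ ^ 2) := by
    intro lam ε hε0 hε1 u hu hc hs
    have h1 := transversal_bound hΩo hqm hQ hlam₁ hu hc hs
    have h2 := neg_mul_integral_le_potential hΩo hqm hQ hu hc
    rw [integral_add (integrable_gradSq hu hc).integrableOn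
      (integrableOn_potential_mul_normSq hΩo hqm hQ hu hc)] at h1
    rw [integral_form_eq hΩo hqm hQ hu hc]
    have h3 := mul_le_mul_of_nonneg_left h1 (sub_nonneg.2 hε1.le)
    have h4 := mul_le_mul_of_nonneg_left h2 hε0.le
    linarith
  refine ⟨main, fun lam hlam => ?_⟩
  have hK : 0 < lam₁ - lam := sub_pos.2 hlam
  have hD : 0 < 2 * (lam₁ - lam + |lam₁| + |Q|) := by positivity
  -- With this choice `ε * (lam₁ + Q) ≤ (lam₁ - lam) / 2`.
  obtain ⟨ε, hε⟩ : ∃ ε, ε = (lam₁ - lam) / (2 * (lam₁ - lam + |lam₁| + |Q|)) := ⟨_, rfl⟩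
  have hε0 : 0 < ε := hε ▸ div_pos hK hD
  have hεD : ε * (2 * (lam₁ - lam + |lam₁| + |Q|)) = lam₁ - lam := by
    rw [hε, div_mul_cancel₀ _ hD.ne']
  have hε1 : ε < 1 := by
    rw [hε, div_lt_one hD]
    linarith [abs_nonneg lam₁, abs_nonneg Q]
  refine ⟨ε, hε0, hε1, min ε ((lam₁ - lam) / 2), lt_min hε0 (half_pos hK), ?_⟩
  intro u hu hc hs
  have hcoef : (lam₁ - lam) / 2 ≤ lam₁ * (1 - ε) - ε * Q - lam := by
    have h1 := mul_le_mul_of_nonneg_left (le_abs_self lam₁) hε0.le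
    have h2 := mul_le_mul_of_nonneg_left (le_abs_self Q) hε0.le
    have h3 := mul_pos hε0 hK
    linarith
  refine le_trans ?_ (main lam ε hε0 hε1 u hu hc hs)
  rw [integral_add (integrable_gradSq hu hc).integrableOn
    (integrable_normSq_of_hasCompactSupport hu.continuous hc).integrableOn, mul_add]
  have hG0 : 0 ≤ ∫ p in Set.univ ×ˢ Ω₀, gradSq u p :=
    integral_nonneg fun p => by unfold gradSq; positivity
  have hU0 : 0 ≤ ∫ p in Set.univ ×ˢ Ω₀, ‖u p‖ ^ 2 := integral_nonneg fun p => by positivity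
  exact add_le_add (mul_le_mul_of_nonneg_right (min_le_left _ _) hG0)
    (mul_le_mul_of_nonneg_right ((min_le_right _ _).trans hcoef) hU0)
end
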